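/- arXiv:2604.20375 — 3 statements merged into one kernel-verified Lean document; each statement's English description precedes it below -/
import Mathlib

section
/- Under the two-dimensional setup, ∂_t u(r,t) ≥ 0 for all (r,t) ∈ [0,r₀] × [0,T), and ∂_t u(r,t) > 0 for all (r,t) ∈ [0,r₀] × (0,T). Equivalently, the Gauss curvature satisfies K_{g(t)} ≤ −1 on the closed ball for all t ∈ [0,T), with strict inequality K_{g(t)} < −1 for t ∈ (0,T). -/
open Real MeasureTheory Filter

/-- Partial derivative in the radial variable `r`. -/
noncomputable def pr (f : ℝ → ℝ → ℝ) (r t : ℝ) : ℝ := deriv (fun x => f x t) r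

/-- Partial derivative in the time variable `t`. -/
noncomputable def pt (f : ℝ → ℝ → ℝ) (r t : ℝ) : ℝ := deriv (fun τ => f r τ) t

/-- The Gauss curvature `K_g = -e^{-2u}(∂ᵣ²u + coth(r)·∂ᵣu + 1)` of the conformal
metric `g = e^{2u}(dr² + sinh²(r) dθ²)`. -/
noncomputable def K2 (u : ℝ → ℝ → ℝ) (r t : ℝ) : ℝ :=
  -Real.exp (-2 * u r t) *
    (deriv (fun x => pr u x t) r + Real.cosh r / Real.sinh r * pr u r t + 1)

/-- Setup: rotationally symmetric normalized Ricci flow `∂ₜg = -2(K_g + 1)g`,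
`g(t) = e^{2u(r,t)}(dr² + sinh²(r) dθ²)`, on the closed geodesic ball of radius `r₀`
in the hyperbolic plane, starting from the hyperbolic metric, with prescribed
non-decreasing geodesic curvature `η(t)` on the boundary, for `t ∈ [0,T)`, `T ∈ (0,∞]`. -/
structure Setup2 (r₀ : ℝ) (T : EReal) (u : ℝ → ℝ → ℝ) (η : ℝ → ℝ) : Prop where
  hr₀ : 0 < r₀
  hT : 0 < T
  hu_smooth : ContDiff ℝ (⊤ : ℕ∞) (Function.uncurry u)
  hu_origin : ∀ t : ℝ, 0 ≤ t → (t : EReal) < T → pr u 0 t = 0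
  hu_evol : ∀ r t : ℝ, r ∈ Set.Ioc 0 r₀ → 0 ≤ t → (t : EReal) < T →
    pt u r t = Real.exp (-2 * u r t) *
      (deriv (fun x => pr u x t) r + Real.cosh r / Real.sinh r * pr u r t + 1) - 1
  hu_init : ∀ r ∈ Set.Icc 0 r₀, u r 0 = 0
  hbdry : ∀ t : ℝ, 0 ≤ t → (t : EReal) < T →
    pr u r₀ t + Real.cosh r₀ / Real.sinh r₀ = η t * Real.exp (u r₀ t)
  hη_smooth : ContDiff ℝ 2 η
  hη_mono : ∀ s t : ℝ, 0 ≤ s → s ≤ t → η s ≤ η t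
  hη_init : η 0 = Real.cosh r₀ / Real.sinh r₀
  hη_deriv0 : deriv η 0 = 0
  hη_incr : ∃ t₀ > 0, ∀ t : ℝ, 0 < t → t < t₀ → 0 < deriv η t


lemma aux_left (f : ℝ → ℝ) (d a b : ℝ) (hab : b < a) (hf : HasDerivAt f d a)
    (h : ∀ x ∈ Set.Ico b a, f a ≤ f x) : d ≤ 0 := by
  have h1 := hf.tendsto_slope
  have h2 : Tendsto (slope f a) (nhdsWithin a (Set.Iio a)) (nhds d) :=
    h1.mono_left (nhdsWithin_mono _ (fun x hx => ne_of_lt hx))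
  refine le_of_tendsto h2 ?_
  filter_upwards [Ioo_mem_nhdsLT hab] with x hx
  rw [slope_def_field]
  exact div_nonpos_of_nonneg_of_nonpos (by linarith [h x ⟨hx.1.le, hx.2⟩]) (by linarith [hx.2])

lemma aux_right (f : ℝ → ℝ) (d a b : ℝ) (hab : a < b) (hf : HasDerivAt f d a)
    (h : ∀ x ∈ Set.Ioc a b, f a ≤ f x) : 0 ≤ d := by
  have h1 := hf.tendsto_slope
  have h2 : Tendsto (slope f a) (nhdsWithin a (Set.Ioi a)) (nhds d) :=
    h1.mono_left (nhdsWithin_mono _ (fun x hx => ne_of_gt hx))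
  refine ge_of_tendsto h2 ?_
  filter_upwards [Ioo_mem_nhdsGT hab] with x hx
  rw [slope_def_field]
  exact div_nonneg (by linarith [h x ⟨hx.1, hx.2.le⟩]) (by linarith [hx.1])

lemma aux_second (f f' : ℝ → ℝ) (d a : ℝ) (hf : ∀ x, HasDerivAt f (f' x) x)
    (hf' : HasDerivAt f' d a) (h : IsLocalMin f a) : 0 ≤ d := by
  by_contra hd
  push Not at hd
  have e : deriv f = f' := funext fun x => (hf x).deriv
  have h0 : f' a = 0 := h.hasDerivAt_eq_zero (hf a)
  have hmax : IsLocalMax f a := by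
    apply isLocalMax_of_deriv_deriv_neg
    · rw [e, hf'.deriv]; exact hd
    · rw [e]; exact h0
    · exact (hf a).continuousAt
  have hev : ∀ᶠ x in nhds a, f x = f a := by
    filter_upwards [h, hmax] with x h1 h2
    exact le_antisymm h2 h1
  have hev' : f' =ᶠ[nhds a] fun _ => 0 := by
    filter_upwards [hev.eventually_nhds] with x hx
    have : f =ᶠ[nhds x] fun _ => f a := hx
    have := this.deriv_eq
    rw [(hf x).deriv] at this
    simpa using this
  have := hev'.deriv_eq
  rw [hf'.deriv] at this
  simp at this
  linarith

lemma aux_comp (r₀ t₁ t₂ : ℝ) (h0 : 0 < r₀) (W Wr Wrr Wt : ℝ → ℝ → ℝ)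
    (hc : Continuous (Function.uncurry W))
    (hr : ∀ r t, HasDerivAt (fun x => W x t) (Wr r t) r)
    (hrr : ∀ r t, HasDerivAt (fun x => Wr x t) (Wrr r t) r)
    (ht : ∀ r t, HasDerivAt (fun x => W r x) (Wt r t) t)
    (init : ∀ r ∈ Set.Icc 0 r₀, 0 < W r t₁)
    (b0 : ∀ t ∈ Set.Ioc t₁ t₂, W 0 t = 0 → Wr 0 t < 0)
    (b1 : ∀ t ∈ Set.Ioc t₁ t₂, W r₀ t = 0 → 0 < Wr r₀ t)
    (int : ∀ r ∈ Set.Ioo 0 r₀, ∀ t ∈ Set.Ioc t₁ t₂, W r t = 0 → Wr r t = 0 → 0 ≤ Wrr r t →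
      0 < Wt r t) :
    ∀ r ∈ Set.Icc 0 r₀, ∀ t ∈ Set.Icc t₁ t₂, 0 < W r t := by
  by_contra hcon
  push Not at hcon
  obtain ⟨r', hr', t', ht', hW'⟩ := hcon
  have hK : IsCompact ((Set.Icc 0 r₀ ×ˢ Set.Icc t₁ t₂) ∩ {p : ℝ × ℝ | Function.uncurry W p ≤ 0}) :=
    (isCompact_Icc.prod isCompact_Icc).inter_right (isClosed_le hc continuous_const)
  obtain ⟨⟨r, t⟩, ⟨⟨hrm, htm⟩, hW⟩, hmin⟩ := hK.exists_isMinOn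
    (⟨(r', t'), ⟨hr', ht'⟩, hW'⟩) (continuous_snd.continuousOn)
  simp only at hrm htm
  have hW : W r t ≤ 0 := hW
  have hbefore : ∀ x ∈ Set.Icc 0 r₀, ∀ s ∈ Set.Ico t₁ t, 0 < W x s := by
    intro x hx s hs
    by_contra hh
    push Not at hh
    have : t ≤ s := hmin (a := (x, s)) ⟨⟨hx, hs.1, hs.2.le.trans htm.2⟩, hh⟩
    linarith [hs.2]
  have ht1 : t₁ < t := by
    rcases htm.1.lt_or_eq with h | h
    · exact h
    · rw [← h] at hW; linarith [init r hrm]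
  have hnow : ∀ x ∈ Set.Icc 0 r₀, 0 ≤ W x t := by
    intro x hx
    have h2 : Tendsto (fun s => W x s) (nhdsWithin t (Set.Iio t)) (nhds (W x t)) :=
      ((ht x t).continuousAt.tendsto).mono_left nhdsWithin_le_nhds
    refine ge_of_tendsto h2 ?_
    filter_upwards [Ioo_mem_nhdsLT ht1] with s hs
    exact (hbefore x hx s ⟨hs.1.le, hs.2⟩).le
  have hz : W r t = 0 := le_antisymm hW (hnow r hrm)
  have hWt : Wt r t ≤ 0 := by
    apply aux_left _ _ _ _ ht1 (ht r t)
    intro s hs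
    simp only [hz]
    exact (hbefore r hrm s hs).le
  have htI : t ∈ Set.Ioc t₁ t₂ := ⟨ht1, htm.2⟩
  rcases hrm.1.eq_or_lt with h | h
  · subst h
    have := aux_right _ _ _ _ h0 (hr 0 t) (by
      intro x hx
      simp only [hz]
      exact hnow x ⟨hx.1.le, hx.2⟩)
    linarith [b0 t htI hz]
  rcases hrm.2.eq_or_lt with h' | h'
  · subst h'
    have := aux_left _ _ _ _ h0 (hr r t) (by
      intro x hx
      simp only [hz]
      exact hnow x ⟨hx.1, hx.2.le⟩)
    linarith [b1 t htI hz]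
  have hlm : IsLocalMin (fun x => W x t) r := by
    filter_upwards [Ioo_mem_nhds h h'] with x hx
    simp only [hz]
    exact hnow x ⟨hx.1.le, hx.2.le⟩
  have h1 : Wr r t = 0 := hlm.hasDerivAt_eq_zero (hr r t)
  have h2 := aux_second _ (fun x => Wr x t) _ _ (fun x => hr x t) (hrr r t) hlm
  linarith [int r ⟨h, h'⟩ t htI hz h1 h2]

section smoothness

lemma pr_eq (f : ℝ → ℝ → ℝ) (hf : ContDiff ℝ (⊤ : ℕ∞) (Function.uncurry f)) (r t : ℝ) :
    HasDerivAt (fun x => f x t) (fderiv ℝ (Function.uncurry f) (r, t) (1, 0)) r := by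
  have h1 : HasFDerivAt (Function.uncurry f) (fderiv ℝ (Function.uncurry f) (r, t)) (r, t) :=
    (hf.differentiable (by simp) (r, t)).hasFDerivAt
  have h2 : HasDerivAt (fun x : ℝ => (x, t)) ((1 : ℝ), (0 : ℝ)) r :=
    (hasDerivAt_id r).prodMk (hasDerivAt_const r t)
  exact h1.comp_hasDerivAt r h2

lemma pt_eq (f : ℝ → ℝ → ℝ) (hf : ContDiff ℝ (⊤ : ℕ∞) (Function.uncurry f)) (r t : ℝ) :
    HasDerivAt (fun x => f r x) (fderiv ℝ (Function.uncurry f) (r, t) (0, 1)) t := by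
  have h1 : HasFDerivAt (Function.uncurry f) (fderiv ℝ (Function.uncurry f) (r, t)) (r, t) :=
    (hf.differentiable (by simp) (r, t)).hasFDerivAt
  have h2 : HasDerivAt (fun x : ℝ => (r, x)) ((0 : ℝ), (1 : ℝ)) t :=
    (hasDerivAt_const t r).prodMk (hasDerivAt_id t)
  exact h1.comp_hasDerivAt t h2

lemma pr_has (f : ℝ → ℝ → ℝ) (hf : ContDiff ℝ (⊤ : ℕ∞) (Function.uncurry f)) (r t : ℝ) :
    HasDerivAt (fun x => f x t) (pr f r t) r := (pr_eq f hf r t).differentiableAt.hasDerivAt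

lemma pt_has (f : ℝ → ℝ → ℝ) (hf : ContDiff ℝ (⊤ : ℕ∞) (Function.uncurry f)) (r t : ℝ) :
    HasDerivAt (fun x => f r x) (pt f r t) t := (pt_eq f hf r t).differentiableAt.hasDerivAt

lemma pr_fun (f : ℝ → ℝ → ℝ) (hf : ContDiff ℝ (⊤ : ℕ∞) (Function.uncurry f)) :
    Function.uncurry (pr f) = fun p => fderiv ℝ (Function.uncurry f) p (1, 0) :=
  funext fun p => (pr_eq f hf p.1 p.2).deriv

lemma pt_fun (f : ℝ → ℝ → ℝ) (hf : ContDiff ℝ (⊤ : ℕ∞) (Function.uncurry f)) :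
    Function.uncurry (pt f) = fun p => fderiv ℝ (Function.uncurry f) p (0, 1) :=
  funext fun p => (pt_eq f hf p.1 p.2).deriv

lemma pr_smooth (f : ℝ → ℝ → ℝ) (hf : ContDiff ℝ (⊤ : ℕ∞) (Function.uncurry f)) :
    ContDiff ℝ (⊤ : ℕ∞) (Function.uncurry (pr f)) := by
  rw [pr_fun f hf]
  exact (hf.fderiv_right (m := (⊤ : ℕ∞)) (by simp)).clm_apply contDiff_const

lemma pt_smooth (f : ℝ → ℝ → ℝ) (hf : ContDiff ℝ (⊤ : ℕ∞) (Function.uncurry f)) :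
    ContDiff ℝ (⊤ : ℕ∞) (Function.uncurry (pt f)) := by
  rw [pt_fun f hf]
  exact (hf.fderiv_right (m := (⊤ : ℕ∞)) (by simp)).clm_apply contDiff_const

lemma pr_pt_comm (f : ℝ → ℝ → ℝ) (hf : ContDiff ℝ (⊤ : ℕ∞) (Function.uncurry f)) :
    pt (pr f) = pr (pt f) := by
  funext r t
  have h1 := (pt_eq (pr f) (pr_smooth f hf) r t).deriv
  have h2 := (pr_eq (pt f) (pt_smooth f hf) r t).deriv
  have hd : DifferentiableAt ℝ (fderiv ℝ (Function.uncurry f)) (r, t) :=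
    (hf.fderiv_right (m := (⊤ : ℕ∞)) (by simp)).differentiable (by simp) _
  rw [pr_fun f hf] at h1
  rw [pt_fun f hf] at h2
  rw [fderiv_clm_apply hd (by fun_prop)] at h1 h2
  have hs : IsSymmSndFDerivAt ℝ (Function.uncurry f) (r, t) :=
    (hf.contDiffAt).isSymmSndFDerivAt (by simp; exact WithTop.coe_le_coe.2 (le_top : (2:ℕ∞) ≤ ⊤))
  have := hs.eq (0, 1) (1, 0)
  simp at h1 h2
  show deriv _ _ = deriv _ _
  rw [h1, h2, this]

end smoothness

section facts
variable {r₀ : ℝ} {T : EReal} {u : ℝ → ℝ → ℝ} {η : ℝ → ℝ}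

lemma near_t (t : ℝ) (h0 : 0 < t) (hT : (t : EReal) < T) :
    ∀ᶠ τ : ℝ in nhds t, 0 ≤ τ ∧ (τ : EReal) < T := by
  have h1 : ∀ᶠ τ : ℝ in nhds t, (τ : EReal) < T :=
    (continuous_coe_real_ereal.tendsto t).eventually_lt_const hT
  filter_upwards [h1, lt_mem_nhds h0] with τ a b
  exact ⟨b.le, a⟩

lemma F2 (S : Setup2 r₀ T u η) : ∀ r ∈ Set.Icc 0 r₀, pt u r 0 = 0 := by
  have hcl : IsClosed {r : ℝ | pt u r 0 = 0} := by
    have := (pt_smooth u S.hu_smooth).continuous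
    have h2 : Continuous fun r : ℝ => pt u r 0 := this.comp (by fun_prop : Continuous fun r : ℝ => (r, (0:ℝ)))
    exact isClosed_eq h2 continuous_const
  have hsub : Set.Ioo 0 r₀ ⊆ {r : ℝ | pt u r 0 = 0} := by
    intro r hr
    have h1 : (fun x => pr u x 0) =ᶠ[nhds r] fun _ => 0 := by
      filter_upwards [Ioo_mem_nhds hr.1 hr.2] with x hx
      have : (fun y => u y 0) =ᶠ[nhds x] fun _ => 0 := by
        filter_upwards [Ioo_mem_nhds hx.1 hx.2] with y hy
        exact S.hu_init y ⟨hy.1.le, hy.2.le⟩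
      have := this.deriv_eq
      simpa [pr] using this
    have h2 := S.hu_evol r 0 ⟨hr.1, hr.2.le⟩ le_rfl (by exact_mod_cast S.hT)
    have h3 : pr u r 0 = 0 := h1.self_of_nhds
    rw [h1.deriv_eq, h3, S.hu_init r ⟨hr.1.le, hr.2.le⟩] at h2
    simpa using h2
  have := closure_minimal hsub hcl
  rw [closure_Ioo S.hr₀.ne] at this
  exact this

lemma F3 (S : Setup2 r₀ T u η) (t : ℝ) (h0 : 0 < t) (hT : (t : EReal) < T) :
    pr (pt u) 0 t = 0 := by
  rw [← pr_pt_comm u S.hu_smooth]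
  have : (fun τ => pr u 0 τ) =ᶠ[nhds t] fun _ => 0 := by
    filter_upwards [near_t t h0 hT] with τ h
    exact S.hu_origin τ h.1 h.2
  have := this.deriv_eq
  simpa [pt] using this

lemma F4 (S : Setup2 r₀ T u η) (t : ℝ) (h0 : 0 < t) (hT : (t : EReal) < T) :
    pr (pt u) r₀ t = deriv η t * Real.exp (u r₀ t) + η t * Real.exp (u r₀ t) * pt u r₀ t := by
  rw [← pr_pt_comm u S.hu_smooth]
  have h1 : (fun τ => pr u r₀ τ) =ᶠ[nhds t]
      fun τ => η τ * Real.exp (u r₀ τ) - Real.cosh r₀ / Real.sinh r₀ := by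
    filter_upwards [near_t t h0 hT] with τ h
    linarith [S.hbdry τ h.1 h.2]
  have hη : HasDerivAt η (deriv η t) t :=
    (S.hη_smooth.differentiable (by simp) t).hasDerivAt
  have h2 := ((hη.mul (pt_has u S.hu_smooth r₀ t).exp).sub_const
    (Real.cosh r₀ / Real.sinh r₀)).deriv
  have h3 := h1.deriv_eq
  have h4 : pt (pr u) r₀ t = _ := h3.trans h2
  rw [h4]; ring

lemma F5 (S : Setup2 r₀ T u η) (r t : ℝ) (hr : r ∈ Set.Ioo 0 r₀) (h0 : 0 < t)
    (hT : (t : EReal) < T) :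
    pt (pt u) r t = Real.exp (-2 * u r t) *
      (pr (pr (pt u)) r t + Real.cosh r / Real.sinh r * pr (pt u) r t)
      - 2 * pt u r t * (pt u r t + 1) := by
  have hs := S.hu_smooth
  have h1 : (fun τ => pt u r τ) =ᶠ[nhds t] fun τ => Real.exp (-2 * u r τ) *
      (pr (pr u) r τ + Real.cosh r / Real.sinh r * pr u r τ + 1) - 1 := by
    filter_upwards [near_t t h0 hT] with τ h
    exact S.hu_evol r τ ⟨hr.1, hr.2.le⟩ h.1 h.2
  have hA := pt_has u hs r t
  have hB := pt_has (pr u) (pr_smooth u hs) r t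
  have hC := pt_has (pr (pr u)) (pr_smooth _ (pr_smooth u hs)) r t
  rw [pr_pt_comm _ (pr_smooth u hs), pr_pt_comm u hs] at hC
  rw [pr_pt_comm u hs] at hB
  have h2 := (((hA.const_mul (-2)).exp.mul
    ((hC.add (hB.const_mul (Real.cosh r / Real.sinh r))).add_const 1)).sub_const 1).deriv
  have h4 : pt (pt u) r t = _ := h1.deriv_eq.trans h2
  have h5 := h1.self_of_nhds
  simp only at h5
  rw [h4]
  simp only [Pi.add_apply]
  linear_combination (-2 * pt u r t) * (-1) * h5

lemma F6 (S : Setup2 r₀ T u η) (t : ℝ) (h0 : 0 < t) : 0 ≤ deriv η t := by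
  have hη : HasDerivAt η (deriv η t) t :=
    (S.hη_smooth.differentiable (by simp) t).hasDerivAt
  exact aux_right _ _ _ (t + 1) (by linarith) hη (fun x hx => S.hη_mono t x h0.le hx.1.le)

lemma F7 (S : Setup2 r₀ T u η) (t : ℝ) (h0 : 0 ≤ t) : Real.cosh r₀ / Real.sinh r₀ ≤ η t := by
  rw [← S.hη_init]; exact S.hη_mono 0 t le_rfl h0

lemma coth_pos (r : ℝ) (hr : 0 < r) : 0 < Real.cosh r / Real.sinh r :=
  div_pos (Real.cosh_pos r) (Real.sinh_pos_iff.2 hr)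

lemma sub_comp (S : Setup2 r₀ T u η) (t₁ t₂ : ℝ) (h1 : 0 ≤ t₁) (h2 : (t₂ : EReal) < T)
    (φ φr φrr φt : ℝ → ℝ → ℝ)
    (hc : Continuous (Function.uncurry φ))
    (hr : ∀ r t, HasDerivAt (fun x => φ x t) (φr r t) r)
    (hrr : ∀ r t, HasDerivAt (fun x => φr x t) (φrr r t) r)
    (ht : ∀ r t, HasDerivAt (fun x => φ r x) (φt r t) t)
    (init : ∀ r ∈ Set.Icc 0 r₀, φ r t₁ < pt u r t₁)
    (b0 : ∀ t ∈ Set.Ioc t₁ t₂, 0 < φr 0 t)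
    (b1 : ∀ t ∈ Set.Ioc t₁ t₂, pt u r₀ t = φ r₀ t →
      φr r₀ t < deriv η t * Real.exp (u r₀ t) + η t * Real.exp (u r₀ t) * φ r₀ t)
    (int : ∀ r ∈ Set.Ioo 0 r₀, ∀ t ∈ Set.Ioc t₁ t₂, pt u r t = φ r t →
      φt r t < Real.exp (-2 * u r t) * (φrr r t + Real.cosh r / Real.sinh r * φr r t)
        - 2 * φ r t * (pt u r t + 1)) :
    ∀ r ∈ Set.Icc 0 r₀, ∀ t ∈ Set.Icc t₁ t₂, φ r t < pt u r t := by
  have hs := S.hu_smooth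
  have hv := pt_smooth u hs
  have hT : ∀ t ∈ Set.Ioc t₁ t₂, 0 < t ∧ (t : EReal) < T := fun t ht =>
    ⟨h1.trans_lt ht.1, lt_of_le_of_lt (by exact_mod_cast ht.2) h2⟩
  have key := aux_comp r₀ t₁ t₂ S.hr₀ (fun r t => pt u r t - φ r t)
    (fun r t => pr (pt u) r t - φr r t) (fun r t => pr (pr (pt u)) r t - φrr r t)
    (fun r t => pt (pt u) r t - φt r t)
    (hv.continuous.sub hc)
    (fun r t => (pr_has _ hv r t).sub (hr r t))
    (fun r t => (pr_has _ (pr_smooth _ hv) r t).sub (hrr r t))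
    (fun r t => (pt_has _ hv r t).sub (ht r t))
    (fun r hr => sub_pos.2 (init r hr))
    (fun t ht _ => by
      have := F3 S t (hT t ht).1 (hT t ht).2
      have := b0 t ht
      linarith)
    (fun t ht hz => by
      have e := F4 S t (hT t ht).1 (hT t ht).2
      have hz' := sub_eq_zero.1 hz
      have := b1 t ht hz'
      rw [hz'] at e
      linarith)
    (fun r hr t ht hz hzr hzrr => by
      have e := F5 S r t hr (hT t ht).1 (hT t ht).2
      have hz' := sub_eq_zero.1 hz
      have i := int r hr t ht hz'
      have hzr' := sub_eq_zero.1 hzr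
      have : Real.exp (-2 * u r t) * (φrr r t + Real.cosh r / Real.sinh r * φr r t) ≤
        Real.exp (-2 * u r t) *
          (pr (pr (pt u)) r t + Real.cosh r / Real.sinh r * pr (pt u) r t) := by
        rw [hzr']
        gcongr
        linarith
      rw [← hz'] at i
      linarith)
  intro r hr t ht
  exact sub_pos.1 (key r hr t ht)

lemma bounds (S : Setup2 r₀ T u η) (t₂ : ℝ) : ∃ M > 0,
    ∀ r ∈ Set.Icc 0 r₀, ∀ t ∈ Set.Icc 0 t₂, |pt u r t| ≤ M ∧ Real.exp (-2 * u r t) ≤ M ∧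
      M⁻¹ ≤ Real.exp (-2 * u r t) ∧ Real.exp (u r t) ≤ M ∧ M⁻¹ ≤ Real.exp (u r t) ∧
      η t * Real.exp (u r t) ≤ M := by
  have hK : IsCompact (Set.Icc 0 r₀ ×ˢ Set.Icc 0 t₂) := isCompact_Icc.prod isCompact_Icc
  have hu := S.hu_smooth.continuous
  have hv := (pt_smooth u S.hu_smooth).continuous
  have hη := S.hη_smooth.continuous
  obtain ⟨M, hM⟩ := hK.exists_bound_of_continuousOn
    (f := fun p : ℝ × ℝ => |Function.uncurry (pt u) p| + Real.exp (-2 * Function.uncurry u p) +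
      Real.exp (2 * Function.uncurry u p) + Real.exp (Function.uncurry u p) +
      Real.exp (- Function.uncurry u p) + |η p.2 * Real.exp (Function.uncurry u p)|)
    (by fun_prop)
  refine ⟨|M| + 1, by positivity, ?_⟩
  intro r hr t ht
  have h := (le_abs_self _).trans (hM (r, t) ⟨hr, ht⟩)
  have hMM := le_abs_self M
  simp only [Function.uncurry] at h
  have p1 := abs_nonneg (pt u r t)
  have p2 := Real.exp_pos (-2 * u r t)
  have p3 := Real.exp_pos (2 * u r t)
  have p4 := Real.exp_pos (u r t)
  have p5 := Real.exp_pos (-u r t)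
  have p6 := abs_nonneg (η t * Real.exp (u r t))
  have p7 := le_abs_self (η t * Real.exp (u r t))
  refine ⟨by linarith, by linarith, ?_, by linarith, ?_, by linarith⟩
  · apply inv_le_of_inv_le₀ (by positivity)
    rw [← Real.exp_neg]
    have : -(-2 * u r t) = 2 * u r t := by ring
    rw [this]; linarith
  · apply inv_le_of_inv_le₀ (by positivity)
    rw [← Real.exp_neg]
    linarith

end facts

section steps
variable {r₀ : ℝ} {T : EReal} {u : ℝ → ℝ → ℝ} {η : ℝ → ℝ}

lemma step1 (S : Setup2 r₀ T u η) (t₂ : ℝ) (h0 : 0 ≤ t₂) (h2 : (t₂ : EReal) < T) :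
    ∀ r ∈ Set.Icc 0 r₀, 0 ≤ pt u r t₂ := by
  obtain ⟨M, hM, hb⟩ := bounds S t₂
  have hr₀ := S.hr₀
  obtain ⟨B, hB⟩ : ∃ B : ℝ, B = (M + 1) / r₀ := ⟨_, rfl⟩
  have hBp : 0 < B := by rw [hB]; positivity
  have hBr : B * r₀ = M + 1 := by rw [hB]; field_simp
  obtain ⟨A, hA⟩ : ∃ A : ℝ, A = 2 * M + 1 +
    M * (2 * B + 4 * B ^ 2 * r₀ ^ 2 + 2 * B * Real.cosh r₀) := ⟨_, rfl⟩
  have key : ∀ δ > 0, ∀ r ∈ Set.Icc 0 r₀, ∀ t ∈ Set.Icc 0 t₂,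
      -(δ * Real.exp (A * t + B * (r - r₀ / 2) ^ 2)) < pt u r t := by
    intro δ hδ
    apply sub_comp S 0 t₂ le_rfl h2
      (fun r t => -(δ * Real.exp (A * t + B * (r - r₀ / 2) ^ 2)))
      (fun r t => -(2 * B * (r - r₀ / 2) * (δ * Real.exp (A * t + B * (r - r₀ / 2) ^ 2))))
      (fun r t => -((2 * B + 4 * B ^ 2 * (r - r₀ / 2) ^ 2) *
        (δ * Real.exp (A * t + B * (r - r₀ / 2) ^ 2))))
      (fun r t => -(A * (δ * Real.exp (A * t + B * (r - r₀ / 2) ^ 2))))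
    · unfold Function.uncurry; fun_prop
    · intro r t
      have h1 : HasDerivAt (fun x => A * t + B * (x - r₀ / 2) ^ 2) (2 * B * (r - r₀ / 2)) r := by
        have := ((((hasDerivAt_id r).sub_const (r₀ / 2)).pow 2).const_mul B).const_add (A * t)
        exact this.congr_deriv (by simp; ring)
      exact ((h1.exp.const_mul δ).neg).congr_deriv (by ring)
    · intro r t
      have h1 : HasDerivAt (fun x => A * t + B * (x - r₀ / 2) ^ 2) (2 * B * (r - r₀ / 2)) r := by
        have := ((((hasDerivAt_id r).sub_const (r₀ / 2)).pow 2).const_mul B).const_add (A * t)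
        exact this.congr_deriv (by simp; ring)
      have h2 : HasDerivAt (fun x => 2 * B * (x - r₀ / 2)) (2 * B) r := by
        simpa using ((hasDerivAt_id r).sub_const (r₀ / 2)).const_mul (2 * B)
      exact ((h2.mul (h1.exp.const_mul δ)).neg).congr_deriv (by ring)
    · intro r t
      have h1 : HasDerivAt (fun x => A * x + B * (r - r₀ / 2) ^ 2) A t := by
        simpa using ((hasDerivAt_id t).const_mul A).add_const (B * (r - r₀ / 2) ^ 2)
      exact ((h1.exp.const_mul δ).neg).congr_deriv (by ring)
    · intro r hr
      simp only [F2 S r hr]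
      have : 0 < δ * Real.exp (A * 0 + B * (r - r₀ / 2) ^ 2) := by positivity
      linarith
    · intro t ht
      have : 0 < B * r₀ * (δ * Real.exp (A * t + B * (0 - r₀ / 2) ^ 2)) := by positivity
      try simp only
      linarith
    · intro t ht _
      have hz : 0 < δ * Real.exp (A * t + B * (r₀ - r₀ / 2) ^ 2) := by positivity
      try simp only
      generalize δ * Real.exp (A * t + B * (r₀ - r₀ / 2) ^ 2) = z at hz
      have hc := (hb r₀ ⟨hr₀.le, le_rfl⟩ t ⟨ht.1.le, ht.2⟩).2.2.2.2.2
      have h6 : 0 ≤ deriv η t * Real.exp (u r₀ t) :=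
        mul_nonneg (F6 S t ht.1) (Real.exp_pos _).le
      have h7 : η t * Real.exp (u r₀ t) * z ≤ M * z := by gcongr
      have h8 : 2 * B * (r₀ - r₀ / 2) * z = (M + 1) * z := by rw [← hBr]; ring
      linarith
    · intro r hr t ht hv
      have hz : 0 < δ * Real.exp (A * t + B * (r - r₀ / 2) ^ 2) := by positivity
      try simp only at hv ⊢
      generalize δ * Real.exp (A * t + B * (r - r₀ / 2) ^ 2) = z at hz hv
      obtain ⟨c1, c2, -⟩ := hb r ⟨hr.1.le, hr.2.le⟩ t ⟨ht.1.le, ht.2⟩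
      have c1 := (abs_le.1 c1).1
      have hsp : 0 < Real.sinh r := Real.sinh_pos_iff.2 hr.1
      have q1 : Real.cosh r / Real.sinh r * (r - r₀ / 2) ≤ Real.cosh r₀ := by
        rw [div_mul_eq_mul_div, div_le_iff₀ hsp]
        have a1 : r ≤ Real.sinh r := Real.self_le_sinh_iff.2 hr.1.le
        have a2 : Real.cosh r ≤ Real.cosh r₀ := by
          rw [Real.cosh_le_cosh, abs_of_pos hr.1, abs_of_pos hr₀]; exact hr.2.le
        have a3 := Real.cosh_pos r
        calc Real.cosh r * (r - r₀ / 2) ≤ Real.cosh r * Real.sinh r := by gcongr; linarith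
          _ ≤ _ := by gcongr
      have q2 : (r - r₀ / 2) ^ 2 ≤ r₀ ^ 2 := by
        apply sq_le_sq'  <;> linarith [hr.1, hr.2]
      have q3 : Real.exp (-2 * u r t) * (2 * B + 4 * B ^ 2 * (r - r₀ / 2) ^ 2 +
          2 * B * (Real.cosh r / Real.sinh r * (r - r₀ / 2))) ≤
          M * (2 * B + 4 * B ^ 2 * r₀ ^ 2 + 2 * B * Real.cosh r₀) := by
        have p := Real.cosh_pos r₀
        calc _ ≤ Real.exp (-2 * u r t) *
              (2 * B + 4 * B ^ 2 * r₀ ^ 2 + 2 * B * Real.cosh r₀) := by gcongr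
          _ ≤ _ := by gcongr
      have q4 := mul_le_mul_of_nonneg_right q3 hz.le
      have q5 : 0 ≤ z * (pt u r t + M) := mul_nonneg hz.le (by linarith)
      rw [hA]
      linarith
  intro r hr
  by_contra hneg
  push Not at hneg
  have hE := Real.exp_pos (A * t₂ + B * (r - r₀ / 2) ^ 2)
  have := key (-pt u r t₂ / Real.exp (A * t₂ + B * (r - r₀ / 2) ^ 2))
    (div_pos (by linarith) hE) r hr t₂ ⟨h0, le_rfl⟩
  rw [div_mul_cancel₀ _ hE.ne'] at this
  linarith

lemma step2a (S : Setup2 r₀ T u η) (t : ℝ) (h0 : 0 < t) (h2 : (t : EReal) < T)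
    (hd : 0 < deriv η t) : 0 < pt u r₀ t := by
  have hr₀ := S.hr₀
  have hn := step1 S t h0.le h2
  rcases (hn r₀ ⟨hr₀.le, le_rfl⟩).lt_or_eq with h | h
  · exact h
  exfalso
  have := aux_left (fun x => pt u x t) _ _ _ hr₀
    (pr_has (pt u) (pt_smooth u S.hu_smooth) r₀ t) (by
      intro x hx
      simp only [← h]
      exact hn x ⟨hx.1, hx.2.le⟩)
  rw [F4 S t h0 h2, ← h] at this
  have : 0 < deriv η t * Real.exp (u r₀ t) := by positivity
  linarith

lemma step2 (S : Setup2 r₀ T u η) (s t₂ : ℝ) (hs : 0 < s) (hst : s < t₂) (h2 : (t₂ : EReal) < T)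
    (hd : ∀ t ∈ Set.Icc s t₂, 0 < deriv η t) :
    ∀ r ∈ Set.Icc 0 r₀, 0 < pt u r t₂ := by
  obtain ⟨M, hM, hb⟩ := bounds S t₂
  have hr₀ := S.hr₀
  have hT : ∀ t ∈ Set.Icc s t₂, 0 < t ∧ (t : EReal) < T := fun t ht =>
    ⟨hs.trans_le ht.1, lt_of_le_of_lt (by exact_mod_cast ht.2) h2⟩
  have hcv : Continuous fun t => pt u r₀ t :=
    (pt_smooth u S.hu_smooth).continuous.comp (by fun_prop : Continuous fun t : ℝ => (r₀, t))
  obtain ⟨tm, htm, hmin⟩ := isCompact_Icc.exists_isMinOn (Set.nonempty_Icc.2 hst.le)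
    hcv.continuousOn
  have hmp : 0 < pt u r₀ tm := step2a S tm (hT tm htm).1 (hT tm htm).2 (hd tm htm)
  obtain ⟨N, hN⟩ : ∃ N : ℝ, N = (r₀ + 2) / (t₂ - s) := ⟨_, rfl⟩
  have hts : 0 < t₂ - s := by linarith
  have hNp : 0 < N := by rw [hN]; positivity
  have hNs : N * (t₂ - s) = r₀ + 2 := by rw [hN]; field_simp
  obtain ⟨α, hα⟩ : ∃ α : ℝ, α = M * (N + 2 * (M + 1) + 1) + 1 := ⟨_, rfl⟩
  have hα1 : 1 ≤ α := by
    have : 0 < M * (N + 2 * (M + 1) + 1) := by positivity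
    linarith
  have hα2 : α * N + 2 * (M + 1) < M⁻¹ * α ^ 2 := by
    have e : M⁻¹ * α = (N + 2 * (M + 1) + 1) + M⁻¹ := by rw [hα]; field_simp
    have : M⁻¹ * α ^ 2 = ((N + 2 * (M + 1) + 1) + M⁻¹) * α := by rw [← e]; ring
    rw [this]
    have : 0 < M⁻¹ * α := by positivity
    have : 2 * (M + 1) * 1 ≤ 2 * (M + 1) * α := by gcongr
    linarith
  obtain ⟨ε, hε⟩ : ∃ ε : ℝ, ε = pt u r₀ tm / Real.exp (α * (r₀ + 1)) := ⟨_, rfl⟩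
  have hεp : 0 < ε := by rw [hε]; positivity
  have key := sub_comp S s t₂ hs.le h2
      (fun r t => ε * (Real.exp (α * (N * (t - s) + r - r₀ - 1)) - 1))
      (fun r t => ε * (α * Real.exp (α * (N * (t - s) + r - r₀ - 1))))
      (fun r t => ε * (α ^ 2 * Real.exp (α * (N * (t - s) + r - r₀ - 1))))
      (fun r t => ε * (α * N * Real.exp (α * (N * (t - s) + r - r₀ - 1))))
      (by unfold Function.uncurry; fun_prop) ?_ ?_ ?_ ?_ ?_ ?_ ?_
  · intro r hr
    have h := key r hr t₂ ⟨hst.le, le_rfl⟩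
    simp only [hNs] at h
    have : 1 < Real.exp (α * (r₀ + 2 + r - r₀ - 1)) := by
      rw [Real.one_lt_exp_iff]
      apply mul_pos (by linarith)
      linarith [hr.1]
    have : 0 < ε * (Real.exp (α * (r₀ + 2 + r - r₀ - 1)) - 1) := mul_pos hεp (by linarith)
    linarith
  · intro r t
    have h1 : HasDerivAt (fun x => α * (N * (t - s) + x - r₀ - 1)) α r := by
      simpa using ((((hasDerivAt_id r).const_add (N * (t - s))).sub_const r₀).sub_const 1).const_mul α
    exact ((h1.exp.sub_const 1).const_mul ε).congr_deriv (by ring)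
  · intro r t
    have h1 : HasDerivAt (fun x => α * (N * (t - s) + x - r₀ - 1)) α r := by
      simpa using ((((hasDerivAt_id r).const_add (N * (t - s))).sub_const r₀).sub_const 1).const_mul α
    exact ((h1.exp.const_mul α).const_mul ε).congr_deriv (by ring)
  · intro r t
    have h1 : HasDerivAt (fun x => α * (N * (x - s) + r - r₀ - 1)) (α * N) t := by
      simpa using (((((((hasDerivAt_id t).sub_const s).const_mul N).add_const r).sub_const
        r₀).sub_const 1).const_mul α)
    exact ((h1.exp.sub_const 1).const_mul ε).congr_deriv (by ring)
  · intro r hr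
    have hn := step1 S s hs.le (hT s ⟨le_rfl, hst.le⟩).2 r hr
    have : Real.exp (α * (N * (s - s) + r - r₀ - 1)) < 1 := by
      rw [Real.exp_lt_one_iff]
      apply mul_neg_of_pos_of_neg (by linarith)
      simp
      linarith [hr.2]
    have : ε * (Real.exp (α * (N * (s - s) + r - r₀ - 1)) - 1) < 0 :=
      mul_neg_of_pos_of_neg hεp (by linarith)
    try simp only
    linarith
  · intro t ht
    have : 0 < α := by linarith
    positivity
  · intro t ht hv
    exfalso
    have h1 : pt u r₀ tm ≤ pt u r₀ t := hmin (a := t) ⟨ht.1.le, ht.2⟩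
    have h3 : N * (t - s) ≤ r₀ + 2 := by rw [← hNs]; gcongr; exact ht.2
    have h4 : Real.exp (α * (N * (t - s) + r₀ - r₀ - 1)) ≤ Real.exp (α * (r₀ + 1)) := by
      apply Real.exp_le_exp.2
      apply mul_le_mul_of_nonneg_left _ (by linarith)
      linarith
    have h5 : ε * Real.exp (α * (r₀ + 1)) = pt u r₀ tm := by
      rw [hε]; field_simp
    have h6 := mul_le_mul_of_nonneg_left h4 hεp.le
    try simp only at hv
    linarith
  · intro r hr t ht hv
    have ht' : t ∈ Set.Icc s t₂ := ⟨ht.1.le, ht.2⟩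
    have hn := step1 S t (hT t ht').1.le (hT t ht').2 r ⟨hr.1.le, hr.2.le⟩
    obtain ⟨c1, -, c3, -⟩ := hb r ⟨hr.1.le, hr.2.le⟩ t ⟨(hT t ht').1.le, ht.2⟩
    have c1 := (abs_le.1 c1).2
    try simp only at hv ⊢
    rw [← hv]
    have hE := Real.exp_pos (α * (N * (t - s) + r - r₀ - 1))
    generalize Real.exp (α * (N * (t - s) + r - r₀ - 1)) = E at hE hv
    have hcoth := coth_pos r hr.1
    have hα0 : 0 < α := by linarith
    have k1 : M⁻¹ * (ε * (α ^ 2 * E)) ≤ Real.exp (-2 * u r t) *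
        (ε * (α ^ 2 * E) + Real.cosh r / Real.sinh r * (ε * (α * E))) := by
      have : 0 ≤ Real.cosh r / Real.sinh r * (ε * (α * E)) := by positivity
      calc _ ≤ Real.exp (-2 * u r t) * (ε * (α ^ 2 * E)) := by gcongr
        _ ≤ _ := by gcongr; linarith
    have k2 : 2 * pt u r t * (pt u r t + 1) ≤ 2 * (ε * E) * (M + 1) := by
      have : pt u r t ≤ ε * E := by rw [hv]; linarith
      gcongr
    have k3 := mul_lt_mul_of_pos_right hα2 (mul_pos hεp hE)
    linarith

lemma step3 (S : Setup2 r₀ T u η) (s t₂ : ℝ) (hs : 0 < s) (hst : s ≤ t₂) (h2 : (t₂ : EReal) < T)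
    (hp : ∀ r ∈ Set.Icc 0 r₀, 0 < pt u r s) :
    ∀ r ∈ Set.Icc 0 r₀, 0 < pt u r t₂ := by
  obtain ⟨M, hM, hb⟩ := bounds S t₂
  have hr₀ := S.hr₀
  have hcv : Continuous fun r => pt u r s :=
    (pt_smooth u S.hu_smooth).continuous.comp (by fun_prop : Continuous fun r : ℝ => (r, s))
  obtain ⟨rm, hrm, hmin⟩ := isCompact_Icc.exists_isMinOn (Set.nonempty_Icc.2 hr₀.le)
    hcv.continuousOn
  have hmp := hp rm hrm
  have hco := coth_pos r₀ hr₀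
  obtain ⟨β, hβ⟩ : ∃ β : ℝ, β = Real.cosh r₀ / Real.sinh r₀ * M⁻¹ / 2 := ⟨_, rfl⟩
  have hβp : 0 < β := by rw [hβ]; positivity
  obtain ⟨m, hm⟩ : ∃ m : ℝ, m = pt u rm s / (2 * Real.exp (β * r₀)) := ⟨_, rfl⟩
  have hmp' : 0 < m := by rw [hm]; positivity
  have key := sub_comp S s t₂ hs.le h2
      (fun r t => m * Real.exp (-(2 * M + 3) * (t - s) + β * r))
      (fun r t => β * (m * Real.exp (-(2 * M + 3) * (t - s) + β * r)))
      (fun r t => β ^ 2 * (m * Real.exp (-(2 * M + 3) * (t - s) + β * r)))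
      (fun r t => -(2 * M + 3) * (m * Real.exp (-(2 * M + 3) * (t - s) + β * r)))
      (by unfold Function.uncurry; fun_prop) ?_ ?_ ?_ ?_ ?_ ?_ ?_
  · intro r hr
    refine lt_trans ?_ (key r hr t₂ ⟨hst, le_rfl⟩)
    positivity
  · intro r t
    have h1 : HasDerivAt (fun x => -(2 * M + 3) * (t - s) + β * x) β r := by
      simpa using ((hasDerivAt_id r).const_mul β).const_add (-(2 * M + 3) * (t - s))
    exact (h1.exp.const_mul m).congr_deriv (by ring)
  · intro r t
    have h1 : HasDerivAt (fun x => -(2 * M + 3) * (t - s) + β * x) β r := by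
      simpa using ((hasDerivAt_id r).const_mul β).const_add (-(2 * M + 3) * (t - s))
    exact ((h1.exp.const_mul m).const_mul β).congr_deriv (by ring)
  · intro r t
    have h1 : HasDerivAt (fun x => -(2 * M + 3) * (x - s) + β * r) (-(2 * M + 3)) t := by
      simpa using (((hasDerivAt_id t).sub_const s).const_mul (-(2 * M + 3))).add_const (β * r)
    exact (h1.exp.const_mul m).congr_deriv (by ring)
  · intro r hr
    have h1 : pt u rm s ≤ pt u r s := hmin hr
    have h3 : Real.exp (-(2 * M + 3) * (s - s) + β * r) ≤ Real.exp (β * r₀) := by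
      apply Real.exp_le_exp.2
      have := mul_le_mul_of_nonneg_left hr.2 hβp.le
      linarith
    have h5 : m * Real.exp (β * r₀) = pt u rm s / 2 := by
      rw [hm]; field_simp
    have h6 := mul_le_mul_of_nonneg_left h3 hmp'.le
    try simp only
    linarith
  · intro t ht
    positivity
  · intro t ht hv
    have ht0 : 0 < t := hs.trans ht.1
    obtain ⟨-, -, -, -, c5, -⟩ := hb r₀ ⟨hr₀.le, le_rfl⟩ t ⟨ht0.le, ht.2⟩
    have hz : 0 < m * Real.exp (-(2 * M + 3) * (t - s) + β * r₀) := by positivity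
    try simp only
    generalize m * Real.exp (-(2 * M + 3) * (t - s) + β * r₀) = z at hz
    have h6 : 0 ≤ deriv η t * Real.exp (u r₀ t) :=
      mul_nonneg (F6 S t ht0) (Real.exp_pos _).le
    have h7 := F7 S t ht0.le
    have h8 : Real.cosh r₀ / Real.sinh r₀ * M⁻¹ ≤ η t * Real.exp (u r₀ t) := by
      have : 0 ≤ η t := by linarith
      gcongr
    have h9 : β < η t * Real.exp (u r₀ t) := by linarith
    have := mul_lt_mul_of_pos_right h9 hz
    linarith
  · intro r hr t ht hv
    have ht0 : 0 < t := hs.trans ht.1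
    obtain ⟨c1, -⟩ := hb r ⟨hr.1.le, hr.2.le⟩ t ⟨ht0.le, ht.2⟩
    have c1 := (abs_le.1 c1).2
    have hz : 0 < m * Real.exp (-(2 * M + 3) * (t - s) + β * r) := by positivity
    try simp only
    generalize m * Real.exp (-(2 * M + 3) * (t - s) + β * r) = z at hz
    have hcoth := coth_pos r hr.1
    have k1 : 0 ≤ Real.exp (-2 * u r t) *
        (β ^ 2 * z + Real.cosh r / Real.sinh r * (β * z)) := by positivity
    have k2 : z * (pt u r t) ≤ z * M := by gcongr
    linarith

lemma step4 (S : Setup2 r₀ T u η) (t : ℝ) (h0 : 0 < t) (h2 : (t : EReal) < T) :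
    ∀ r ∈ Set.Icc 0 r₀, 0 < pt u r t := by
  obtain ⟨t₀, ht₀, hd⟩ := S.hη_incr
  obtain ⟨q, hq⟩ : ∃ q : ℝ, q = min t (t₀ / 2) := ⟨_, rfl⟩
  have hq0 : 0 < q := by rw [hq]; exact lt_min h0 (by linarith)
  have hqt : q ≤ t := by rw [hq]; exact min_le_left _ _
  have hqt₀ : q ≤ t₀ / 2 := by rw [hq]; exact min_le_right _ _
  have hqT : (q : EReal) < T := lt_of_le_of_lt (by exact_mod_cast hqt) h2
  apply step3 S q t hq0 hqt h2
  apply step2 S (q / 2) q (by linarith) (by linarith) hqT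
  intro x hx
  exact hd x (by linarith [hx.1]) (by linarith [hx.2])

end steps

/-- `∂ₜu ≥ 0` on `[0,r₀] × [0,T)` and `∂ₜu > 0` on `[0,r₀] × (0,T)`;
equivalently, the Gauss curvature satisfies `K_{g(t)} ≤ -1` for `t ∈ [0,T)` and
`K_{g(t)} < -1` for `t ∈ (0,T)`. -/
theorem stmt_17 (r₀ : ℝ) (T : EReal) (u : ℝ → ℝ → ℝ) (η : ℝ → ℝ)
    (S : Setup2 r₀ T u η) :
    (∀ r t : ℝ, r ∈ Set.Icc 0 r₀ → 0 ≤ t → (t : EReal) < T → 0 ≤ pt u r t) ∧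
    (∀ r t : ℝ, r ∈ Set.Icc 0 r₀ → 0 < t → (t : EReal) < T → 0 < pt u r t) ∧
    (∀ r t : ℝ, r ∈ Set.Ioc 0 r₀ → 0 ≤ t → (t : EReal) < T → K2 u r t ≤ -1) ∧
    (∀ r t : ℝ, r ∈ Set.Ioc 0 r₀ → 0 < t → (t : EReal) < T → K2 u r t < -1) := by
  refine ⟨fun r t hr h0 hT => step1 S t h0 hT r hr, fun r t hr h0 hT => step4 S t h0 hT r hr,
    fun r t hr h0 hT => ?_, fun r t hr h0 hT => ?_⟩
  · have h1 := step1 S t h0 hT r ⟨hr.1.le, hr.2⟩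
    have h2 := S.hu_evol r t hr h0 hT
    unfold K2
    linarith
  · have h1 := step4 S t h0 hT r ⟨hr.1.le, hr.2⟩
    have h2 := S.hu_evol r t hr h0.le hT
    unfold K2
    linarith
end

section
/- Under the two-dimensional setup with T = ∞: for any 0 < t₀ ≤ t, the area A(t) := 2π ∫₀^{r₀} e^{2u(r,t)} sinh(r) dr satisfies A(t) ≥ A(t₀) + 2·L₀·∫_{t₀}^{t} e^{−2τ} (∫_{t₀}^{τ} e^{2y} η'(y) dy) dτ, where L₀ = 2π sinh(r₀) is the length of the boundary circle with respect to the initial hyperbolic metric. Consequently, if there exist ε > 0 and T' > 0 such that η'(t) ≥ ε (1+t)^{−1} (ln(1+t))^{−1} for all t ≥ T', then A(t) → ∞ as t → ∞. -/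
open Real MeasureTheory Filter

lemma h_pr_eq {F : ℝ → ℝ → ℝ} (hF : ContDiff ℝ (⊤ : ℕ∞) (Function.uncurry F)) (r t : ℝ) :
    HasDerivAt (fun x => F x t) (fderiv ℝ (Function.uncurry F) (r, t) (1, 0)) r := by
  have h1 : HasFDerivAt (Function.uncurry F) (fderiv ℝ (Function.uncurry F) (r, t)) (r, t) :=
    ((hF.differentiable (by simp)) (r, t)).hasFDerivAt
  have h2 : HasDerivAt (fun x : ℝ => (x, t)) ((1 : ℝ), (0 : ℝ)) r :=
    (hasDerivAt_id r).prodMk (hasDerivAt_const r t)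
  exact h1.comp_hasDerivAt r h2

lemma h_pt_eq {F : ℝ → ℝ → ℝ} (hF : ContDiff ℝ (⊤ : ℕ∞) (Function.uncurry F)) (r t : ℝ) :
    HasDerivAt (fun x => F r x) (fderiv ℝ (Function.uncurry F) (r, t) (0, 1)) t := by
  have h1 : HasFDerivAt (Function.uncurry F) (fderiv ℝ (Function.uncurry F) (r, t)) (r, t) :=
    ((hF.differentiable (by simp)) (r, t)).hasFDerivAt
  have h2 : HasDerivAt (fun x : ℝ => (r, x)) ((0 : ℝ), (1 : ℝ)) t :=
    (hasDerivAt_const t r).prodMk (hasDerivAt_id t)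
  exact h1.comp_hasDerivAt t h2

lemma pr_fd {F : ℝ → ℝ → ℝ} (hF : ContDiff ℝ (⊤ : ℕ∞) (Function.uncurry F)) :
    Function.uncurry (pr F) = fun p => fderiv ℝ (Function.uncurry F) p (1, 0) := by
  ext ⟨r, t⟩
  exact (h_pr_eq hF r t).deriv

lemma pt_fd {F : ℝ → ℝ → ℝ} (hF : ContDiff ℝ (⊤ : ℕ∞) (Function.uncurry F)) :
    Function.uncurry (pt F) = fun p => fderiv ℝ (Function.uncurry F) p (0, 1) := by
  ext ⟨r, t⟩
  exact (h_pt_eq hF r t).deriv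

lemma hd_pr {F : ℝ → ℝ → ℝ} (hF : ContDiff ℝ (⊤ : ℕ∞) (Function.uncurry F)) (r t : ℝ) :
    HasDerivAt (fun x => F x t) (pr F r t) r :=
  (h_pr_eq hF r t).differentiableAt.hasDerivAt

lemma hd_pt {F : ℝ → ℝ → ℝ} (hF : ContDiff ℝ (⊤ : ℕ∞) (Function.uncurry F)) (r t : ℝ) :
    HasDerivAt (fun x => F r x) (pt F r t) t :=
  (h_pt_eq hF r t).differentiableAt.hasDerivAt

lemma fd_smooth {F : ℝ → ℝ → ℝ} (hF : ContDiff ℝ (⊤ : ℕ∞) (Function.uncurry F)) :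
    ContDiff ℝ (⊤ : ℕ∞) (fderiv ℝ (Function.uncurry F)) :=
  hF.fderiv_right (by simp)

lemma pr_smooth_s18 {F : ℝ → ℝ → ℝ} (hF : ContDiff ℝ (⊤ : ℕ∞) (Function.uncurry F)) :
    ContDiff ℝ (⊤ : ℕ∞) (Function.uncurry (pr F)) := by
  rw [pr_fd hF]
  exact (fd_smooth hF).clm_apply contDiff_const

lemma pt_smooth_s18 {F : ℝ → ℝ → ℝ} (hF : ContDiff ℝ (⊤ : ℕ∞) (Function.uncurry F)) :
    ContDiff ℝ (⊤ : ℕ∞) (Function.uncurry (pt F)) := by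
  rw [pt_fd hF]
  exact (fd_smooth hF).clm_apply contDiff_const

lemma pr_pt_comm_s18 {F : ℝ → ℝ → ℝ} (hF : ContDiff ℝ (⊤ : ℕ∞) (Function.uncurry F)) (r t : ℝ) :
    pr (pt F) r t = pt (pr F) r t := by
  have hs : IsSymmSndFDerivAt ℝ (Function.uncurry F) (r, t) :=
    (hF.contDiffAt (x := (r, t))).isSymmSndFDerivAt (by
      rw [minSmoothness_of_isRCLikeNormedField]; exact WithTop.coe_le_coe.2 (le_top : (2 : ℕ∞) ≤ ⊤))
  have e1 : pr (pt F) r t = fderiv ℝ (fderiv ℝ (Function.uncurry F)) (r, t) (1, 0) (0, 1) := by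
    have := congrFun (pr_fd (pt_smooth_s18 hF)) (r, t)
    rw [pt_fd hF] at this
    rw [show pr (pt F) r t = Function.uncurry (pr (pt F)) (r, t) from rfl, this]
    rw [fderiv_clm_apply (((fd_smooth hF).differentiable (by simp)) _)
      (differentiableAt_const _)]
    simp
  have e2 : pt (pr F) r t = fderiv ℝ (fderiv ℝ (Function.uncurry F)) (r, t) (0, 1) (1, 0) := by
    have := congrFun (pt_fd (pr_smooth_s18 hF)) (r, t)
    rw [pr_fd hF] at this
    rw [show pt (pr F) r t = Function.uncurry (pt (pr F)) (r, t) from rfl, this]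
    rw [fderiv_clm_apply (((fd_smooth hF).differentiable (by simp)) _)
      (differentiableAt_const _)]
    simp
  rw [e1, e2, hs.eq]

lemma left_min {f : ℝ → ℝ} {c a x : ℝ} (hf : HasDerivAt f c x) (hax : a < x)
    (hmin : ∀ y ∈ Set.Icc a x, f x ≤ f y) : c ≤ 0 := by
  have h := hf.tendsto_slope
  have h2 : Tendsto (slope f x) (nhdsWithin x (Set.Iio x)) (nhds c) :=
    h.mono_left (nhdsWithin_mono _ (fun y hy => ne_of_lt hy))
  refine le_of_tendsto h2 ?_
  filter_upwards [Ioo_mem_nhdsLT hax] with y hy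
  rw [slope_def_field]
  exact div_nonpos_of_nonneg_of_nonpos (by linarith [hmin y ⟨hy.1.le, hy.2.le⟩])
    (by linarith [hy.2])

lemma second_min {f f' : ℝ → ℝ} {c b x : ℝ} (hf : ∀ y, HasDerivAt f (f' y) y)
    (hf' : HasDerivAt f' c x) (h0 : f' x = 0) (hxb : x < b)
    (hmin : ∀ y ∈ Set.Icc x b, f x ≤ f y) : 0 ≤ c := by
  by_contra hc
  push Not at hc
  have h2 : Tendsto (slope f' x) (nhdsWithin x (Set.Ioi x)) (nhds c) :=
    hf'.tendsto_slope.mono_left (nhdsWithin_mono _ (fun y hy => ne_of_gt hy))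
  have h3 : ∀ᶠ y in nhdsWithin x (Set.Ioi x), f' y < 0 := by
    filter_upwards [h2.eventually (gt_mem_nhds hc), self_mem_nhdsWithin] with y hy hy2
    rw [slope_def_field, h0, sub_zero] at hy
    have : 0 < y - x := sub_pos.2 hy2
    by_contra hh
    push Not at hh
    exact absurd hy (not_lt.2 (div_nonneg hh this.le))
  obtain ⟨z, hz, hz2⟩ := (mem_nhdsGT_iff_exists_Ioo_subset).1 h3
  have hz : x < z := hz
  set y := min b ((x + z) / 2) with hy
  have hxy : x < y := lt_min hxb (by linarith)
  have hyz : y < z := lt_of_le_of_lt (min_le_right _ _) (by linarith)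
  have hanti : StrictAntiOn f (Set.Icc x y) := by
    refine strictAntiOn_of_deriv_neg (convex_Icc _ _)
      (fun w _ => (hf w).continuousAt.continuousWithinAt) ?_
    intro w hw
    rw [interior_Icc] at hw
    rw [(hf w).deriv]
    exact hz2 ⟨hw.1, hw.2.trans hyz⟩
  have := hanti ⟨le_refl _, hxy.le⟩ ⟨hxy.le, le_refl _⟩ hxy
  linarith [hmin y ⟨hxy.le, min_le_left _ _⟩]

lemma min_principle (d a : ℝ → ℝ → ℝ) (hd : ContDiff ℝ (⊤ : ℕ∞) (Function.uncurry d))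
    (ha : Continuous (Function.uncurry a)) (ha0 : ∀ r t, 0 ≤ a r t) (r₀ T B C : ℝ)
    (hr₀ : 0 < r₀)
    (h_eq : ∀ r ∈ Set.Ioc 0 r₀, ∀ t ∈ Set.Ioc 0 T, d r t < 0 →
      a r t * (pr (pr d) r t + Real.cosh r / Real.sinh r * pr d r t) + C * d r t ≤ pt d r t)
    (h0 : ∀ t ∈ Set.Ioc 0 T, pr d 0 t = 0)
    (hb : ∀ t ∈ Set.Ioc 0 T, d r₀ t < 0 → B * d r₀ t ≤ pr d r₀ t)
    (hi : ∀ r ∈ Set.Icc 0 r₀, 0 ≤ d r 0) :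
    ∀ r ∈ Set.Icc 0 r₀, ∀ t ∈ Set.Icc 0 T, 0 ≤ d r t := by
  intro rr hrr tt htt
  by_contra hneg
  push Not at hneg
  have hK : IsCompact (Set.Icc (0:ℝ) r₀ ×ˢ Set.Icc (0:ℝ) T) := isCompact_Icc.prod isCompact_Icc
  have hne : (Set.Icc (0:ℝ) r₀ ×ˢ Set.Icc (0:ℝ) T).Nonempty := ⟨(rr, tt), hrr, htt⟩
  obtain ⟨M, hM⟩ : ∃ M, ∀ r ∈ Set.Icc (0:ℝ) r₀, ∀ t ∈ Set.Icc (0:ℝ) T, a r t ≤ M := by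
    obtain ⟨M, hM⟩ := hK.bddAbove_image (f := Function.uncurry a) ha.continuousOn
    exact ⟨M, fun r hr t ht => hM ⟨(r, t), ⟨hr, ht⟩, rfl⟩⟩
  obtain ⟨k, hk0, hkB⟩ : ∃ k : ℝ, 0 < k ∧ B < 2 * k * r₀ := by
    refine ⟨(|B| + 1) / (2 * r₀), by positivity, ?_⟩
    have : 2 * ((|B| + 1) / (2 * r₀)) * r₀ = |B| + 1 := by field_simp
    rw [this]
    linarith [le_abs_self B]
  set Q := 2 * k + 4 * k ^ 2 * r₀ ^ 2 + 2 * k * Real.cosh r₀ with hQ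
  obtain ⟨l, hl⟩ : ∃ l : ℝ, l = M * Q + C + 1 := ⟨_, rfl⟩
  have hdc : Continuous (Function.uncurry d) := hd.continuous
  have hwc : Continuous (fun p : ℝ × ℝ =>
      Real.exp (-l * p.2) * (Real.exp (-k * p.1 ^ 2) * Function.uncurry d p)) := by fun_prop
  obtain ⟨⟨r, t⟩, ⟨hr, ht⟩, hmin⟩ := hK.exists_isMinOn hne hwc.continuousOn
  simp only at hr ht
  have hmin' : ∀ y ∈ Set.Icc 0 r₀, ∀ s ∈ Set.Icc 0 T,
      Real.exp (-l * t) * (Real.exp (-k * r ^ 2) * d r t) ≤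
      Real.exp (-l * s) * (Real.exp (-k * y ^ 2) * d y s) :=
    fun y hy s hs => hmin (show ((y, s) : ℝ × ℝ) ∈ _ from ⟨hy, hs⟩)
  have hdneg : d r t < 0 := by
    by_contra hh
    push Not at hh
    have h1 := hmin' rr hrr tt htt
    have h2 : Real.exp (-l * tt) * (Real.exp (-k * rr ^ 2) * d rr tt) < 0 :=
      mul_neg_of_pos_of_neg (Real.exp_pos _) (mul_neg_of_pos_of_neg (Real.exp_pos _) hneg)
    have h3 : 0 ≤ Real.exp (-l * t) * (Real.exp (-k * r ^ 2) * d r t) := by positivity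
    linarith
  have ht0 : 0 < t := by
    rcases eq_or_lt_of_le ht.1 with h | h
    · rw [← h] at hdneg
      exact absurd hdneg (not_lt.2 (hi r hr))
    · exact h
  have htT : t ∈ Set.Ioc 0 T := ⟨ht0, ht.2⟩
  -- time
  have htime : pt d r t ≤ l * d r t := by
    have h1 : HasDerivAt (fun s => Real.exp (-l * s) * d r s)
        (Real.exp (-l * t) * (-l) * d r t + Real.exp (-l * t) * pt d r t) t := by
      have e : HasDerivAt (fun s : ℝ => Real.exp (-l * s)) (Real.exp (-l * t) * (-l)) t := by
        have := ((hasDerivAt_id t).const_mul (-l)).exp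
        simpa using this
      exact e.mul (hd_pt hd r t)
    have h2 := left_min h1 ht0 (by
      intro s hs
      have := hmin' r hr s ⟨hs.1, hs.2.trans ht.2⟩
      have e := Real.exp_pos (-k * r ^ 2)
      have : Real.exp (-k * r ^ 2) * (Real.exp (-l * t) * d r t) ≤
        Real.exp (-k * r ^ 2) * (Real.exp (-l * s) * d r s) := by linarith
      exact le_of_mul_le_mul_left this e)
    have e := Real.exp_pos (-l * t)
    have h3 : Real.exp (-l * t) * (pt d r t - l * d r t) ≤ 0 := by linarith
    have := nonpos_of_mul_nonpos_right h3 e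
    linarith
  -- space
  have hexp : ∀ y : ℝ, HasDerivAt (fun y : ℝ => Real.exp (-k * y ^ 2))
      (Real.exp (-k * y ^ 2) * (-k * (2 * y))) y := by
    intro y
    have := ((hasDerivAt_pow 2 y).const_mul (-k)).exp
    simpa using this
  have hf : ∀ y, HasDerivAt (fun y => Real.exp (-k * y ^ 2) * d y t)
      (Real.exp (-k * y ^ 2) * (pr d y t - 2 * k * y * d y t)) y := by
    intro y
    refine ((hexp y).mul (hd_pr hd y t)).congr_deriv ?_
    ring
  have hsmin : ∀ y ∈ Set.Icc 0 r₀,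
      Real.exp (-k * r ^ 2) * d r t ≤ Real.exp (-k * y ^ 2) * d y t := by
    intro y hy
    exact le_of_mul_le_mul_left (hmin' y hy t ht) (Real.exp_pos _)
  have hrlt : r < r₀ := by
    rcases eq_or_lt_of_le hr.2 with h | h
    · exfalso
      subst h
      have h2 := left_min (hf r) hr₀ hsmin
      have h3 := nonpos_of_mul_nonpos_right h2 (Real.exp_pos _)
      have h4 := hb t htT hdneg
      nlinarith
    · exact h
  have hstat : pr d r t = 2 * k * r * d r t := by
    rcases eq_or_lt_of_le hr.1 with h | h
    · rw [← h, h0 t htT]; ring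
    · have hloc : IsLocalMin (fun y => Real.exp (-k * y ^ 2) * d y t) r := by
        filter_upwards [Icc_mem_nhds h hrlt] with y hy
        exact hsmin y hy
      have := hloc.hasDerivAt_eq_zero (hf r)
      have h5 := (mul_eq_zero.1 this).resolve_left (Real.exp_pos _).ne'
      linarith
  have hd2 : (2 * k + 4 * k ^ 2 * r ^ 2) * d r t ≤ pr (pr d) r t := by
    have hf2 : HasDerivAt (fun y => Real.exp (-k * y ^ 2) * (pr d y t - 2 * k * y * d y t))
        (Real.exp (-k * r ^ 2) * (pr (pr d) r t - (2 * k + 4 * k ^ 2 * r ^ 2) * d r t)) r := by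
      have h1 : HasDerivAt (fun y : ℝ => 2 * k * y) (2 * k) r := by
        simpa using (hasDerivAt_id r).const_mul (2 * k)
      refine ((hexp r).mul
        ((hd_pr (pr_smooth_s18 hd) r t).sub (h1.mul (hd_pr hd r t)))).congr_deriv ?_
      simp only [Pi.mul_apply, Pi.sub_apply]
      rw [hstat]
      ring
    have := second_min hf hf2 (by rw [hstat]; ring) hrlt
      (fun y hy => hsmin y ⟨hr.1.trans hy.1, hy.2⟩)
    have := nonneg_of_mul_nonneg_right this (Real.exp_pos _)
    linarith
  have hM' := hM r hr t ht
  have ha' := ha0 r t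
  have hcr : 1 ≤ Real.cosh r₀ := Real.one_le_cosh r₀
  suffices hmain : a r t * (Q * d r t) + C * d r t ≤ pt d r t by
    have hQ0 : 0 < Q := by positivity
    have h6 : a r t * Q ≤ M * Q := mul_le_mul_of_nonneg_right hM' hQ0.le
    have h7 : M * Q * d r t ≤ a r t * Q * d r t := mul_le_mul_of_nonpos_right h6 hdneg.le
    rw [hl] at htime
    nlinarith
  rcases eq_or_lt_of_le hr.1 with h | h
  · -- at the origin
    subst h
    have hA : Tendsto (fun y => a y t) (nhdsWithin 0 (Set.Ioi 0)) (nhds (a 0 t)) := by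
      have : Continuous (fun y => Function.uncurry a (y, t)) := by fun_prop
      exact (this.tendsto 0).mono_left nhdsWithin_le_nhds
    have hD : Tendsto (fun y => d y t) (nhdsWithin 0 (Set.Ioi 0)) (nhds (d 0 t)) := by
      have : Continuous (fun y => Function.uncurry d (y, t)) := by fun_prop
      exact (this.tendsto 0).mono_left nhdsWithin_le_nhds
    have hDt : Tendsto (fun y => pt d y t) (nhdsWithin 0 (Set.Ioi 0)) (nhds (pt d 0 t)) := by
      have := (pt_smooth_s18 hd).continuous
      have : Continuous (fun y => Function.uncurry (pt d) (y, t)) := by fun_prop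
      exact (this.tendsto 0).mono_left nhdsWithin_le_nhds
    have hDrr : Tendsto (fun y => pr (pr d) y t) (nhdsWithin 0 (Set.Ioi 0))
        (nhds (pr (pr d) 0 t)) := by
      have := (pr_smooth_s18 (pr_smooth_s18 hd)).continuous
      have : Continuous (fun y => Function.uncurry (pr (pr d)) (y, t)) := by fun_prop
      exact (this.tendsto 0).mono_left nhdsWithin_le_nhds
    have hq : Tendsto (fun y => Real.cosh y / Real.sinh y * pr d y t)
        (nhdsWithin 0 (Set.Ioi 0)) (nhds (pr (pr d) 0 t)) := by
      have s1 : Tendsto (slope (fun y => pr d y t) 0) (nhdsWithin 0 (Set.Ioi 0))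
          (nhds (pr (pr d) 0 t)) :=
        (hd_pr (pr_smooth_s18 hd) 0 t).tendsto_slope.mono_left
          (nhdsWithin_mono _ (fun y hy => ne_of_gt hy))
      have s2 : Tendsto (slope Real.sinh 0) (nhdsWithin 0 (Set.Ioi 0)) (nhds 1) := by
        have := (Real.hasDerivAt_sinh 0).tendsto_slope.mono_left
          (nhdsWithin_mono (0:ℝ) (fun y (hy : y ∈ Set.Ioi (0:ℝ)) => ne_of_gt hy))
        simpa using this
      have s3 : Tendsto Real.cosh (nhdsWithin 0 (Set.Ioi 0)) (nhds 1) := by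
        have := (Real.continuous_cosh.tendsto 0).mono_left
          (nhdsWithin_le_nhds (s := Set.Ioi (0:ℝ)))
        simpa using this
      have s4 := s3.mul (s1.div s2 one_ne_zero)
      rw [div_one, one_mul] at s4
      refine s4.congr' ?_
      filter_upwards [self_mem_nhdsWithin] with y hy
      have hy : 0 < y := hy
      have : Real.sinh y ≠ 0 := (Real.sinh_pos_iff.2 hy).ne'
      simp only [Pi.div_apply, slope_def_field, h0 t htT, Real.sinh_zero, sub_zero]
      field_simp
    have hlim := ((hA.mul (hDrr.add hq)).add (hD.const_mul C))
    have hineq := le_of_tendsto_of_tendsto hlim hDt (by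
      filter_upwards [Ioo_mem_nhdsGT hr₀, hD.eventually (gt_mem_nhds hdneg)] with y hy hy2
      exact h_eq y ⟨hy.1, hy.2.le⟩ t htT hy2)
    have h8 : Q * d 0 t ≤ pr (pr d) 0 t + pr (pr d) 0 t := by
      have : 4 * k ≤ Q := by nlinarith [sq_nonneg (k * r₀)]
      nlinarith
    have := mul_le_mul_of_nonneg_left h8 ha'
    linarith
  · have h9 := h_eq r ⟨h, hr.2⟩ t htT hdneg
    have hs : 0 < Real.sinh r := Real.sinh_pos_iff.2 h
    have h10 : Real.cosh r / Real.sinh r * r ≤ Real.cosh r₀ := by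
      have e1 : r ≤ Real.sinh r := Real.self_le_sinh_iff.2 h.le
      have e2 : Real.cosh r ≤ Real.cosh r₀ := by
        rw [Real.cosh_le_cosh, abs_of_pos h, abs_of_pos hr₀]; exact hr.2
      have e3 := Real.cosh_pos r
      rw [div_mul_eq_mul_div, div_le_iff₀ hs]
      nlinarith
    have h11 : Q * d r t ≤ pr (pr d) r t + Real.cosh r / Real.sinh r * pr d r t := by
      rw [hstat]
      have e4 : r ^ 2 ≤ r₀ ^ 2 := by nlinarith [hr.2]
      have e5 : 2 * k + 4 * k ^ 2 * r ^ 2 + 2 * k * (Real.cosh r / Real.sinh r * r) ≤ Q := by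
        have := mul_le_mul_of_nonneg_left e4 (by positivity : 0 ≤ 4 * k ^ 2)
        have := mul_le_mul_of_nonneg_left h10 (by positivity : 0 ≤ 2 * k)
        linarith
      have := mul_le_mul_of_nonpos_right e5 hdneg.le
      linarith
    have := mul_le_mul_of_nonneg_left h11 ha'
    linarith

lemma hd_param {F : ℝ → ℝ → ℝ} (hF : ContDiff ℝ (⊤ : ℕ∞) (Function.uncurry F)) (a b t : ℝ) :
    HasDerivAt (fun s => ∫ r in a..b, F r s) (∫ r in a..b, pt F r t) t := by
  have hc := hF.continuous
  have hc' := (pt_smooth_s18 hF).continuous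
  have hcx : ∀ s, Continuous (fun r => F r s) := fun s => by
    have : Continuous (fun r => Function.uncurry F (r, s)) := by fun_prop
    exact this
  have hcx' : ∀ s, Continuous (fun r => pt F r s) := fun s => by
    have : Continuous (fun r => Function.uncurry (pt F) (r, s)) := by fun_prop
    exact this
  obtain ⟨M, hM⟩ := ((isCompact_uIcc (a := a) (b := b)).prod
    (isCompact_Icc (a := t - 1) (b := t + 1))).exists_bound_of_continuousOn
    (f := Function.uncurry (pt F)) hc'.continuousOn
  refine (intervalIntegral.hasDerivAt_integral_of_dominated_loc_of_deriv_le
    (F := fun s r => F r s) (F' := fun s r => pt F r s) (bound := fun _ => M)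
    (s := Set.Icc (t - 1) (t + 1)) (Icc_mem_nhds (by linarith) (by linarith))
    (Eventually.of_forall fun s => (hcx s).aestronglyMeasurable)
    ((hcx t).intervalIntegrable _ _) (hcx' t).aestronglyMeasurable
    (Eventually.of_forall fun r hr s hs => hM (r, s) ⟨Set.uIoc_subset_uIcc hr, hs⟩)
    (by simp) (Eventually.of_forall fun r _ s _ => hd_pt hF r s)).2

lemma eta_pos {r₀ : ℝ} {u : ℝ → ℝ → ℝ} {η : ℝ → ℝ} (S : Setup2 r₀ ⊤ u η) (t : ℝ) (ht : 0 ≤ t) :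
    0 ≤ η t := by
  have h1 := S.hη_mono 0 t le_rfl ht
  rw [S.hη_init] at h1
  have : 0 < Real.cosh r₀ / Real.sinh r₀ :=
    div_pos (Real.cosh_pos _) (Real.sinh_pos_iff.2 S.hr₀)
  linarith

lemma eta_hd {r₀ : ℝ} {u : ℝ → ℝ → ℝ} {η : ℝ → ℝ} (S : Setup2 r₀ ⊤ u η) (t : ℝ) :
    HasDerivAt η (deriv η t) t :=
  ((S.hη_smooth.differentiable (by simp)) t).hasDerivAt

lemma eta'_nonneg {r₀ : ℝ} {u : ℝ → ℝ → ℝ} {η : ℝ → ℝ} (S : Setup2 r₀ ⊤ u η) (t : ℝ)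
    (ht : 0 < t) : 0 ≤ deriv η t := by
  have h := left_min (eta_hd S t).neg ht
    (fun y hy => neg_le_neg (S.hη_mono y t hy.1 hy.2))
  linarith

lemma ut_nonneg {r₀ : ℝ} {u : ℝ → ℝ → ℝ} {η : ℝ → ℝ} (S : Setup2 r₀ ⊤ u η) :
    ∀ t : ℝ, 0 ≤ t → ∀ r ∈ Set.Icc 0 r₀, 0 ≤ pt u r t := by
  intro T hT r hr
  have hu := S.hu_smooth
  have hv := pt_smooth_s18 hu
  have huc := hu.continuous
  have hvc := hv.continuous
  have hηc := S.hη_smooth.continuous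
  have hac : Continuous (Function.uncurry (fun r t => Real.exp (-2 * u r t))) := by
    have : Continuous (fun p : ℝ × ℝ => Real.exp (-2 * Function.uncurry u p)) := by fun_prop
    exact this
  have hK : IsCompact (Set.Icc (0:ℝ) r₀ ×ˢ Set.Icc (0:ℝ) T) := isCompact_Icc.prod isCompact_Icc
  obtain ⟨m, hm⟩ : ∃ m, ∀ r ∈ Set.Icc (0:ℝ) r₀, ∀ t ∈ Set.Icc (0:ℝ) T, m ≤ pt u r t := by
    obtain ⟨m, hm⟩ := hK.bddBelow_image (f := Function.uncurry (pt u)) hvc.continuousOn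
    exact ⟨m, fun r hr t ht => hm ⟨(r, t), ⟨hr, ht⟩, rfl⟩⟩
  obtain ⟨B, hB⟩ : ∃ B, ∀ t ∈ Set.Icc (0:ℝ) T, η t * Real.exp (u r₀ t) ≤ B := by
    have hc : Continuous (fun t => η t * Real.exp (Function.uncurry u (r₀, t))) := by fun_prop
    obtain ⟨B, hB⟩ := (isCompact_Icc (a := (0:ℝ)) (b := T)).bddAbove_image hc.continuousOn
    exact ⟨B, fun t ht => hB ⟨t, ht, rfl⟩⟩
  have hpc : pr (pt u) = pt (pr u) := by
    ext r t; exact pr_pt_comm_s18 hu r t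
  refine min_principle (pt u) (fun r t => Real.exp (-2 * u r t)) hv hac
    (fun r t => (Real.exp_pos _).le) r₀ T B (-2 - 2 * m) S.hr₀ ?_ ?_ ?_ ?_ r hr T ⟨hT, le_rfl⟩
  · intro r hr t ht hneg
    have hev : (fun s => pt u r s) =ᶠ[nhds t] fun s => Real.exp (-2 * u r s) *
        (pr (pr u) r s + Real.cosh r / Real.sinh r * pr u r s + 1) - 1 := by
      filter_upwards [Ioi_mem_nhds ht.1] with s hs
      exact S.hu_evol r s hr (le_of_lt hs) (EReal.coe_lt_top s)
    have h1 := (((hd_pt hu r t).const_mul (-2)).exp.mul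
      (((hd_pt (pr_smooth_s18 (pr_smooth_s18 hu)) r t).add
        ((hd_pt (pr_smooth_s18 hu) r t).const_mul (Real.cosh r / Real.sinh r))).add_const 1)).sub_const 1
    have h2 := (h1.congr_of_eventuallyEq hev).deriv
    change pt (pt u) r t = _ at h2
    have h3 := hev.eq_of_nhds
    have e1 : pt (pr (pr u)) r t = pr (pr (pt u)) r t := by
      rw [← pr_pt_comm_s18 (pr_smooth_s18 hu), hpc]
    rw [e1, ← hpc] at h2
    rw [h2]
    have h4 := hm r ⟨hr.1.le, hr.2⟩ t ⟨ht.1.le, ht.2⟩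
    have h5 : Real.exp (-2 * u r t) *
        (pr (pr u) r t + Real.cosh r / Real.sinh r * pr u r t + 1) = pt u r t + 1 := by linarith
    have h6 : Real.exp (-2 * u r t) * (-2 * pt u r t) *
        (pr (pr u) r t + Real.cosh r / Real.sinh r * pr u r t + 1)
        = (pt u r t + 1) * (-2 * pt u r t) := by rw [← h5]; ring
    simp only [Pi.add_apply]
    rw [h6]
    nlinarith
  · intro t ht
    rw [pr_pt_comm_s18 hu]
    have hev : (fun s => pr u 0 s) =ᶠ[nhds t] fun s => 0 := by
      filter_upwards [Ioi_mem_nhds ht.1] with s hs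
      exact S.hu_origin s (le_of_lt hs) (EReal.coe_lt_top s)
    change deriv (fun s => pr u 0 s) t = 0
    rw [hev.deriv_eq]; simp
  · intro t ht hneg
    rw [pr_pt_comm_s18 hu]
    have hev : (fun s => pr u r₀ s) =ᶠ[nhds t] fun s => η s * Real.exp (u r₀ s)
        - Real.cosh r₀ / Real.sinh r₀ := by
      filter_upwards [Ioi_mem_nhds ht.1] with s hs
      have := S.hbdry s (le_of_lt hs) (EReal.coe_lt_top s)
      linarith
    have h1 := ((eta_hd S t).mul (hd_pt hu r₀ t).exp).sub_const (Real.cosh r₀ / Real.sinh r₀)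
    have h2 := (h1.congr_of_eventuallyEq hev).deriv
    change pt (pr u) r₀ t = _ at h2
    rw [h2]
    have h3 := mul_nonneg (eta'_nonneg S t ht.1) (Real.exp_pos (u r₀ t)).le
    have h4 := mul_le_mul_of_nonpos_right (hB t ⟨ht.1.le, ht.2⟩) hneg.le
    linarith
  · have hpos : ∀ r ∈ Set.Ioo 0 r₀, 0 ≤ pt u r 0 := by
      intro r hr
      have h1 := S.hu_evol r 0 ⟨hr.1, hr.2.le⟩ le_rfl (EReal.coe_lt_top 0)
      have e0 : ∀ y ∈ Set.Ioo 0 r₀, pr u y 0 = 0 := by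
        intro y hy
        have hev : (fun x => u x 0) =ᶠ[nhds y] fun _ => 0 := by
          filter_upwards [Ioo_mem_nhds hy.1 hy.2] with x hx
          exact S.hu_init x ⟨hx.1.le, hx.2.le⟩
        change deriv (fun x => u x 0) y = 0
        rw [hev.deriv_eq]; simp
      have e1 : deriv (fun x => pr u x 0) r = 0 := by
        have hev : (fun x => pr u x 0) =ᶠ[nhds r] fun _ => 0 := by
          filter_upwards [Ioo_mem_nhds hr.1 hr.2] with x hx
          exact e0 x hx
        rw [hev.deriv_eq]; simp
      rw [h1, e1, e0 r hr, S.hu_init r ⟨hr.1.le, hr.2.le⟩]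
      simp
    have hcl : IsClosed {r : ℝ | 0 ≤ pt u r 0} := by
      have : Continuous (fun r => Function.uncurry (pt u) (r, 0)) := by fun_prop
      exact isClosed_le continuous_const this
    intro r hr
    have := closure_minimal (s := Set.Ioo 0 r₀) hpos hcl
    rw [closure_Ioo S.hr₀.ne] at this
    exact this hr

lemma area_hd {r₀ : ℝ} {u : ℝ → ℝ → ℝ} {η : ℝ → ℝ} (S : Setup2 r₀ ⊤ u η) (t : ℝ) (ht : 0 ≤ t) :
    HasDerivAt (fun s => 2 * Real.pi * ∫ r in (0)..r₀, Real.exp (2 * u r s) * Real.sinh r)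
      (2 * (2 * Real.pi * Real.sinh r₀) * (η t * Real.exp (u r₀ t)) - 4 * Real.pi
        - 2 * (2 * Real.pi * ∫ r in (0)..r₀, Real.exp (2 * u r t) * Real.sinh r)) t := by
  have hu := S.hu_smooth
  have hF : ContDiff ℝ (⊤ : ℕ∞)
      (Function.uncurry (fun r s => Real.exp (2 * u r s) * Real.sinh r)) := by
    have : ContDiff ℝ (⊤ : ℕ∞)
        (fun p : ℝ × ℝ => Real.exp (2 * Function.uncurry u p) * Real.sinh p.1) :=
      ((contDiff_const.mul hu).exp).mul (contDiff_fst.sinh)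
    exact this
  have hcx : Continuous (fun r => Real.exp (2 * u r t) * Real.sinh r) := by
    have := hF.continuous
    have : Continuous (fun r => Function.uncurry
      (fun r s => Real.exp (2 * u r s) * Real.sinh r) (r, t)) := by fun_prop
    exact this
  refine ((hd_param hF 0 r₀ t).const_mul (2 * Real.pi)).congr_deriv ?_
  have hr : ∀ r ∈ Set.uIoc 0 r₀, pt (fun r s => Real.exp (2 * u r s) * Real.sinh r) r t
      = 2 * (pr (pr u) r t * Real.sinh r + pr u r t * Real.cosh r + Real.sinh r)
        - 2 * (Real.exp (2 * u r t) * Real.sinh r) := by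
    intro r hr
    rw [Set.uIoc_of_le S.hr₀.le] at hr
    have h1 := S.hu_evol r t hr ht (EReal.coe_lt_top t)
    have h2 : pt (fun r s => Real.exp (2 * u r s) * Real.sinh r) r t
      = Real.exp (2 * u r t) * (2 * pt u r t) * Real.sinh r :=
      (((hd_pt hu r t).const_mul 2).exp.mul_const (Real.sinh r)).deriv
    have hs : Real.sinh r ≠ 0 := (Real.sinh_pos_iff.2 hr.1).ne'
    change _ = Real.exp (-2 * u r t) * (pr (pr u) r t + _ + 1) - 1 at h1
    rw [h2, h1, show -2 * u r t = -(2 * u r t) by ring, Real.exp_neg]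
    have := Real.exp_pos (2 * u r t)
    field_simp
  have hcg : Continuous (fun r =>
      pr (pr u) r t * Real.sinh r + pr u r t * Real.cosh r + Real.sinh r) := by
    have c1 := (pr_smooth_s18 hu).continuous
    have c2 := (pr_smooth_s18 (pr_smooth_s18 hu)).continuous
    have : Continuous (fun r => Function.uncurry (pr (pr u)) (r, t) * Real.sinh r
      + Function.uncurry (pr u) (r, t) * Real.cosh r + Real.sinh r) := by
      have := Real.continuous_sinh
      have := Real.continuous_cosh
      fun_prop
    exact this
  have hftc : ∫ r in (0)..r₀, (pr (pr u) r t * Real.sinh r + pr u r t * Real.cosh r + Real.sinh r)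
      = (pr u r₀ t * Real.sinh r₀ + Real.cosh r₀) - (pr u 0 t * Real.sinh 0 + Real.cosh 0) := by
    refine intervalIntegral.integral_eq_sub_of_hasDerivAt
      (f := fun r => pr u r t * Real.sinh r + Real.cosh r) ?_ (hcg.intervalIntegrable _ _)
    intro r _
    exact ((hd_pr (pr_smooth_s18 hu) r t).mul (Real.hasDerivAt_sinh r)).add (Real.hasDerivAt_cosh r)
  rw [intervalIntegral.integral_congr_ae (Eventually.of_forall hr),
    intervalIntegral.integral_sub ((hcg.intervalIntegrable _ _).const_mul 2)
      ((hcx.intervalIntegrable _ _).const_mul 2),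
    intervalIntegral.integral_const_mul, intervalIntegral.integral_const_mul, hftc,
    ← S.hbdry t ht (EReal.coe_lt_top t)]
  have hs : Real.sinh r₀ ≠ 0 := (Real.sinh_pos_iff.2 S.hr₀).ne'
  simp only [Real.sinh_zero, Real.cosh_zero]
  field_simp
  ring

lemma deriv_comp_le {f g f' g' : ℝ → ℝ} {a b : ℝ} (hab : a ≤ b)
    (hf : ∀ x ∈ Set.Icc a b, HasDerivAt f (f' x) x)
    (hg : ∀ x ∈ Set.Icc a b, HasDerivAt g (g' x) x)
    (h : ∀ x ∈ Set.Ioo a b, g' x ≤ f' x) : g b - g a ≤ f b - f a := by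
  have hm : MonotoneOn (fun x => f x - g x) (Set.Icc a b) := by
    refine monotoneOn_of_deriv_nonneg (convex_Icc _ _)
      (fun x hx => ((hf x hx).sub (hg x hx)).continuousAt.continuousWithinAt) ?_ ?_
    · intro x hx
      have hx' := interior_subset hx
      exact ((hf x hx').sub (hg x hx')).differentiableAt.differentiableWithinAt
    · intro x hx
      have hx' := interior_subset hx
      rw [interior_Icc] at hx
      have : deriv (fun x => f x - g x) x = f' x - g' x := ((hf x hx').sub (hg x hx')).deriv
      rw [this]
      linarith [h x hx]
  have := hm ⟨le_rfl, hab⟩ ⟨hab, le_rfl⟩ hab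
  simp only at this
  linarith

/-- There is a function `D = A'` with controlled growth of `e^{2t} D`. -/
lemma key {r₀ : ℝ} {u : ℝ → ℝ → ℝ} {η : ℝ → ℝ} (S : Setup2 r₀ ⊤ u η) :
    ∃ D : ℝ → ℝ, (∀ t, 0 ≤ t → HasDerivAt
        (fun s => 2 * Real.pi * ∫ r in (0)..r₀, Real.exp (2 * u r s) * Real.sinh r) (D t) t) ∧
      ∀ (H h : ℝ → ℝ) (a b : ℝ), 0 ≤ a → a ≤ b → (∀ x ∈ Set.Icc a b, HasDerivAt H (h x) x) →
        (∀ x ∈ Set.Ioo a b,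
          h x ≤ 2 * (2 * Real.pi * Real.sinh r₀) * (Real.exp (2 * x) * deriv η x)) →
        H b - H a ≤ Real.exp (2 * b) * D b := by
  have hu := S.hu_smooth
  have hs : 0 < Real.sinh r₀ := Real.sinh_pos_iff.2 S.hr₀
  have hr₀ := S.hr₀
  set L : ℝ := 2 * Real.pi * Real.sinh r₀ with hL
  have hL0 : 0 < L := by positivity
  set A : ℝ → ℝ := fun s => 2 * Real.pi * ∫ r in (0)..r₀, Real.exp (2 * u r s) * Real.sinh r
    with hA
  set D : ℝ → ℝ := fun t => 2 * L * (η t * Real.exp (u r₀ t)) - 4 * Real.pi - 2 * A t with hD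
  have hAD : ∀ t, 0 ≤ t → HasDerivAt A (D t) t := fun t ht => area_hd S t ht
  set G' : ℝ → ℝ := fun t => Real.exp (2 * t) *
    (2 * L * (deriv η t * Real.exp (u r₀ t) + η t * (Real.exp (u r₀ t) * pt u r₀ t))) with hG'
  have hG : ∀ t, 0 ≤ t → HasDerivAt (fun t => Real.exp (2 * t) * D t) (G' t) t := by
    intro t ht
    have e : HasDerivAt (fun s : ℝ => Real.exp (2 * s)) (Real.exp (2 * t) * 2) t := by
      have := ((hasDerivAt_id t).const_mul 2).exp
      simpa using this
    have h1 := ((((eta_hd S t).mul (hd_pt hu r₀ t).exp).const_mul (2 * L)).sub_const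
      (4 * Real.pi)).sub ((hAD t ht).const_mul 2)
    refine (e.mul h1).congr_deriv ?_
    simp only [hG', hD, Pi.sub_apply, Pi.mul_apply]
    ring
  have hu0 : ∀ t, 0 ≤ t → 0 ≤ u r₀ t := by
    intro t ht
    have := deriv_comp_le (f := fun s => u r₀ s) (g := fun _ => (0 : ℝ)) (g' := fun _ => 0) ht
      (fun x _ => hd_pt hu r₀ x) (fun x _ => hasDerivAt_const x 0)
      (fun x hx => ut_nonneg S x hx.1.le r₀ ⟨hr₀.le, le_rfl⟩)
    rw [S.hu_init r₀ ⟨hr₀.le, le_rfl⟩] at this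
    linarith
  have hGb : ∀ t, 0 < t → 2 * L * (Real.exp (2 * t) * deriv η t) ≤ G' t := by
    intro t ht
    have h1 := eta'_nonneg S t ht
    have h2 := eta_pos S t ht.le
    have h3 := ut_nonneg S t ht.le r₀ ⟨hr₀.le, le_rfl⟩
    have h4 : 1 ≤ Real.exp (u r₀ t) := Real.one_le_exp (hu0 t ht.le)
    have h5 : deriv η t ≤ deriv η t * Real.exp (u r₀ t)
        + η t * (Real.exp (u r₀ t) * pt u r₀ t) := by
      have : 0 ≤ η t * (Real.exp (u r₀ t) * pt u r₀ t) := by positivity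
      nlinarith
    have h6 : 0 ≤ Real.exp (2 * t) * (2 * L) := by positivity
    have := mul_le_mul_of_nonneg_left h5 h6
    simp only [hG']
    linarith
  have hG0 : D 0 = 0 := by
    have e1 : ∫ r in (0)..r₀, Real.exp (2 * u r 0) * Real.sinh r
        = ∫ r in (0)..r₀, Real.sinh r := by
      refine intervalIntegral.integral_congr ?_
      intro r hr
      rw [Set.uIcc_of_le hr₀.le] at hr
      simp [S.hu_init r hr]
    have e2 : ∫ r in (0)..r₀, Real.sinh r = Real.cosh r₀ - Real.cosh 0 :=
      intervalIntegral.integral_eq_sub_of_hasDerivAt (fun r _ => Real.hasDerivAt_cosh r)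
        (Real.continuous_sinh.intervalIntegrable _ _)
    simp only [hD, hA]
    rw [e1, e2, S.hη_init, S.hu_init r₀ ⟨hr₀.le, le_rfl⟩, hL]
    simp only [Real.exp_zero, Real.cosh_zero]
    field_simp
    ring
  have hGa : ∀ a, 0 ≤ a → 0 ≤ Real.exp (2 * a) * D a := by
    intro a ha
    have := deriv_comp_le (g := fun _ => (0 : ℝ)) (g' := fun _ => 0) ha
      (fun x hx => hG x hx.1) (fun x _ => hasDerivAt_const x 0)
      (fun x hx => le_trans
        (mul_nonneg (by positivity) (mul_nonneg (Real.exp_pos _).le (eta'_nonneg S x hx.1)))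
        (hGb x hx.1))
    rw [hG0] at this
    linarith
  refine ⟨D, hAD, ?_⟩
  intro H h a b ha hab hH hh
  have := deriv_comp_le hab (fun x hx => hG x (ha.trans hx.1)) hH
    (fun x hx => (hh x hx).trans (hGb x (lt_of_le_of_lt ha hx.1)))
  linarith [hGa a ha]

/-- With `T = ∞`, for `0 < t₀ ≤ t` the area
`A(t) = 2π∫₀^{r₀} e^{2u} sinh(r) dr` satisfies
`A(t) ≥ A(t₀) + 2·L₀·∫_{t₀}^t e^{-2τ} (∫_{t₀}^τ e^{2y} η'(y) dy) dτ` with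
`L₀ = 2π sinh(r₀)`; consequently, if `η'(t) ≥ ε(1+t)⁻¹(ln(1+t))⁻¹` for large `t`,
then `A(t) → ∞`. -/
theorem stmt_18 (r₀ : ℝ) (u : ℝ → ℝ → ℝ) (η : ℝ → ℝ)
    (S : Setup2 r₀ ⊤ u η) :
    (∀ t₀ t : ℝ, 0 < t₀ → t₀ ≤ t →
      (2 * Real.pi * ∫ r in (0)..r₀, Real.exp (2 * u r t₀) * Real.sinh r)
        + 2 * (2 * Real.pi * Real.sinh r₀) *
            ∫ τ in t₀..t, Real.exp (-2 * τ) * ∫ y in t₀..τ, Real.exp (2 * y) * deriv η y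
      ≤ 2 * Real.pi * ∫ r in (0)..r₀, Real.exp (2 * u r t) * Real.sinh r) ∧
    ((∃ ε : ℝ, 0 < ε ∧ ∃ T' : ℝ, 0 < T' ∧ ∀ t : ℝ, T' ≤ t →
        ε * (1 + t)⁻¹ * (Real.log (1 + t))⁻¹ ≤ deriv η t) →
      Filter.Tendsto
        (fun t => 2 * Real.pi * ∫ r in (0)..r₀, Real.exp (2 * u r t) * Real.sinh r)
        Filter.atTop Filter.atTop) := by
  obtain ⟨D, hAD, hK⟩ := key S
  have hr₀ := S.hr₀
  have hs : 0 < Real.sinh r₀ := Real.sinh_pos_iff.2 S.hr₀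
  have hη'c : Continuous (deriv η) := S.hη_smooth.continuous_deriv (by norm_num)
  constructor
  · intro t₀ t ht₀ htt
    have hc1 : Continuous (fun y => Real.exp (2 * y) * deriv η y) := by fun_prop
    have hJ : ∀ τ, HasDerivAt (fun τ => ∫ y in t₀..τ, Real.exp (2 * y) * deriv η y)
        (Real.exp (2 * τ) * deriv η τ) τ := fun τ => hc1.integral_hasStrictDerivAt t₀ τ |>.hasDerivAt
    have hJc : Continuous (fun τ => ∫ y in t₀..τ, Real.exp (2 * y) * deriv η y) :=
      continuous_iff_continuousAt.2 fun τ => (hJ τ).continuousAt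
    have hc2 : Continuous (fun τ => Real.exp (-2 * τ) *
        ∫ y in t₀..τ, Real.exp (2 * y) * deriv η y) := by fun_prop
    have hI : ∀ τ, HasDerivAt (fun τ => ∫ s in t₀..τ, Real.exp (-2 * s) *
        ∫ y in t₀..s, Real.exp (2 * y) * deriv η y)
        (Real.exp (-2 * τ) * ∫ y in t₀..τ, Real.exp (2 * y) * deriv η y) τ :=
      fun τ => hc2.integral_hasStrictDerivAt t₀ τ |>.hasDerivAt
    have hfin := deriv_comp_le htt (fun x hx => hAD x (ht₀.le.trans hx.1))
      (fun x _ => (hI x).const_mul (2 * (2 * Real.pi * Real.sinh r₀))) (by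
        intro x hx
        have h1 := hK _ _ t₀ x ht₀.le hx.1.le
          (fun y _ => (hJ y).const_mul (2 * (2 * Real.pi * Real.sinh r₀))) (fun y _ => le_rfl)
        simp only [intervalIntegral.integral_same, mul_zero, sub_zero] at h1
        have h2 := mul_le_mul_of_nonneg_left h1 (Real.exp_pos (-2 * x)).le
        have h3 : Real.exp (-2 * x) * (Real.exp (2 * x) * D x) = D x := by
          rw [← mul_assoc, ← Real.exp_add]; simp
        rw [h3] at h2
        linarith)
    simp only [intervalIntegral.integral_same, mul_zero, sub_zero] at hfin
    linarith
  · rintro ⟨ε, hε, T', hT', hη⟩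
    set t₀ := max T' 1 with ht₀
    have ht₁ : 1 ≤ t₀ := le_max_right _ _
    have htT : T' ≤ t₀ := le_max_left _ _
    obtain ⟨c, hc⟩ : ∃ c : ℝ, c = 2 * Real.pi * Real.sinh r₀ := ⟨_, rfl⟩
    have hc0 : 0 < c := by rw [hc]; positivity
    rw [← hc] at hK
    have hlog : ∀ x, t₀ ≤ x → 0 < Real.log (1 + x) := fun x hx => Real.log_pos (by linarith)
    have hDlow : ∀ τ, t₀ + 1 ≤ τ →
        c * ε / 2 * ((1 + τ)⁻¹ * (Real.log (1 + τ))⁻¹) ≤ D τ := by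
      intro τ hτ
      obtain ⟨g, hg⟩ : ∃ g : ℝ, g = ε * (1 + τ)⁻¹ * (Real.log (1 + τ))⁻¹ := ⟨_, rfl⟩
      have hlτ := hlog τ (by linarith)
      have h1τ : 0 < 1 + τ := by linarith
      have hg0 : 0 < g := by rw [hg]; positivity
      have h1 := hK (fun y => c * g * Real.exp (2 * y)) (fun y => c * g * (Real.exp (2 * y) * 2))
        t₀ τ (by linarith) (by linarith) (by
          intro x _
          have := ((hasDerivAt_id x).const_mul 2).exp.const_mul (c * g)
          simpa using this) (by
          intro x hx
          have hx1 := hx.1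
          have hx2 := hx.2
          have hlx := hlog x hx1.le
          have h1x : 0 < 1 + x := by linarith
          have h2 : g ≤ deriv η x := by
            refine le_trans ?_ (hη x (by linarith))
            rw [hg]
            have : Real.log (1 + x) ≤ Real.log (1 + τ) := Real.log_le_log h1x (by linarith)
            gcongr
          have h3 := mul_le_mul_of_nonneg_left h2 (by positivity : 0 ≤ 2 * c * Real.exp (2 * x))
          linarith)
      have h4 : 2 * Real.exp (2 * t₀) ≤ Real.exp (2 * τ) := by
        rw [show 2 * τ = 2 * t₀ + 2 * (τ - t₀) by ring, Real.exp_add]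
        have := Real.add_one_le_exp (2 * (τ - t₀))
        nlinarith [Real.exp_pos (2 * t₀)]
      have h5 : Real.exp (2 * τ) * (c * g / 2) ≤ Real.exp (2 * τ) * D τ := by
        have := mul_le_mul_of_nonneg_left h4 (by positivity : 0 ≤ c * g)
        linarith
      have h6 := le_of_mul_le_mul_left h5 (Real.exp_pos _)
      rw [hg] at h6
      linarith
    have hlow : ∀ t, t₀ + 1 ≤ t → c * ε / 2 * Real.log (Real.log (1 + t)) +
        ((2 * Real.pi * ∫ r in (0)..r₀, Real.exp (2 * u r (t₀ + 1)) * Real.sinh r) -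
          c * ε / 2 * Real.log (Real.log (1 + (t₀ + 1)))) ≤
        2 * Real.pi * ∫ r in (0)..r₀, Real.exp (2 * u r t) * Real.sinh r := by
      intro t ht
      have := deriv_comp_le (g := fun t => c * ε / 2 * Real.log (Real.log (1 + t)))
        (g' := fun τ => c * ε / 2 * ((1 + τ)⁻¹ * (Real.log (1 + τ))⁻¹)) ht
        (fun x hx => hAD x (by linarith [hx.1])) (by
          intro x hx
          have hlx := hlog x (by linarith [hx.1])
          have h1x : 0 < 1 + x := by linarith [hx.1]
          have h1 := ((((hasDerivAt_id x).const_add 1).log h1x.ne').log hlx.ne').const_mul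
            (c * ε / 2)
          refine h1.congr_deriv ?_
          simp only [id]
          field_simp) (fun x hx => hDlow x hx.1.le)
      linarith
    refine tendsto_atTop_mono' _ ((eventually_ge_atTop (t₀ + 1)).mono hlow) ?_
    refine tendsto_atTop_add_const_right _ _ ?_
    refine Tendsto.const_mul_atTop (by positivity) ?_
    exact Real.tendsto_log_atTop.comp (Real.tendsto_log_atTop.comp
      (tendsto_atTop_add_const_left _ _ tendsto_id))
end

section
/- Under the two-dimensional setup with T = ∞, assume additionally that there exist ε > 0 and T' > 0 such that η'(t) ≥ ε (1+t)^{−1} (ln(1+t))^{−1} for all t ≥ T'. Then u(·,t) is non-decreasing in t and converges as t → ∞, uniformly on [0,r₁] for each r₁ ∈ (0,r₀), to a function u_∞ : [0,r₀) → ℝ that satisfies the stationary equation ∂_r²u_∞ + coth(r)·∂_r u_∞ + 1 = e^{2u_∞} on (0,r₀) (i.e., the Gauss curvature of g_∞ = e^{2u_∞} g₀ is identically −1), and ∫₀^{r₀} e^{u_∞(r)} dr = ∞ (i.e., g_∞ is a complete hyperbolic metric on the open geodesic ball of radius r₀). -/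
open Real MeasureTheory Filter

lemma lap_nonneg (R r : ℝ) (h h' G : ℝ → ℝ) (hr : 0 ≤ r) (hrR : r < R)
    (hd : ∀ x ∈ Set.Icc 0 R, HasDerivAt h (h' x) x)
    (hd2 : ∀ x ∈ Set.Ico 0 R, HasDerivAt (fun x => Real.sinh x * h' x) (Real.sinh x * G x) x)
    (hG : ContinuousOn G (Set.Ico 0 R)) (hmin : ∀ x ∈ Set.Icc 0 R, h r ≤ h x)
    (h0 : Real.sinh r * h' r = 0) : 0 ≤ G r := by
  by_contra hneg
  push Not at hneg
  have hev : ∀ᶠ x in nhdsWithin r (Set.Ico r R), G x < 0 := by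
    have := (hG r ⟨hr, hrR⟩).mono (Set.Ico_subset_Ico_left hr)
    exact this.eventually_lt_const hneg
  rw [nhdsWithin_Ico_eq_nhdsGE hrR] at hev
  obtain ⟨e, he, hsub⟩ := (mem_nhdsGE_iff_exists_Ico_subset' hrR).1 hev
  have he' : r < e := he
  set s := (r + min e R) / 2 with hs
  have h1 : min e R ≤ e := min_le_left _ _
  have h2 : min e R ≤ R := min_le_right _ _
  have h3 : r < min e R := lt_min he' hrR
  have hrs : r < s := by linarith
  have hse : s < e := by linarith
  have hsR : s < R := by linarith
  have hGn : ∀ x, r ≤ x → x ≤ s → G x < 0 := fun x hx hx' => hsub ⟨hx, by linarith⟩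
  have anti1 : StrictAntiOn (fun x => Real.sinh x * h' x) (Set.Icc r s) := by
    apply strictAntiOn_of_deriv_neg (convex_Icc _ _)
    · intro x hx
      exact (hd2 x ⟨by linarith [hx.1], by linarith [hx.2]⟩).continuousAt.continuousWithinAt
    · intro x hx
      rw [interior_Icc] at hx
      rw [(hd2 x ⟨by linarith [hx.1], by linarith [hx.2]⟩).deriv]
      exact mul_neg_of_pos_of_neg (Real.sinh_pos_iff.2 (by linarith [hx.1])) (hGn x hx.1.le hx.2.le)
  have anti2 : StrictAntiOn h (Set.Icc r s) := by
    apply strictAntiOn_of_deriv_neg (convex_Icc _ _)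
    · intro x hx
      exact (hd x ⟨by linarith [hx.1], by linarith [hx.2]⟩).continuousAt.continuousWithinAt
    · intro x hx
      rw [interior_Icc] at hx
      rw [(hd x ⟨by linarith [hx.1], by linarith [hx.2]⟩).deriv]
      have := anti1 ⟨le_refl r, hrs.le⟩ ⟨hx.1.le, hx.2.le⟩ hx.1
      simp only [h0] at this
      have hp := Real.sinh_pos_iff.2 (show 0 < x by linarith [hx.1])
      by_contra hc
      push Not at hc
      have := mul_nonneg hp.le hc
      linarith
  have := anti2 ⟨le_refl r, hrs.le⟩ ⟨hrs.le, le_refl s⟩ hrs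
  have := hmin s ⟨by linarith, hsR.le⟩
  linarith

/-- derivative is nonpositive at a right-endpoint minimum -/
lemma deriv_nonpos_left (f : ℝ → ℝ) (f' a b : ℝ) (hab : a < b) (hf : HasDerivAt f f' b)
    (hmin : ∀ x ∈ Set.Icc a b, f b ≤ f x) : f' ≤ 0 := by
  have hm : IsLocalMinOn f (Set.Icc a b) b := by
    filter_upwards [self_mem_nhdsWithin] with x hx using hmin x hx
  have hy : (a - b) ∈ posTangentConeAt (Set.Icc a b) b := by
    apply sub_mem_posTangentConeAt_of_segment_subset
    rw [segment_symm, segment_eq_Icc hab.le]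
  have := hm.hasFDerivWithinAt_nonneg hf.hasFDerivAt.hasFDerivWithinAt hy
  simp at this
  by_contra hc
  push Not at hc
  nlinarith

lemma min_principle_s19 (R τ a0 C : ℝ) (hR : 0 < R) (hC : 0 ≤ C) (ha0 : 0 ≤ a0)
    (w wr wt G : ℝ → ℝ → ℝ)
    (hcont : ContinuousOn (fun x : ℝ × ℝ => w x.1 x.2) (Set.Icc 0 R ×ˢ Set.Icc 0 τ))
    (hwr : ∀ r ∈ Set.Icc 0 R, ∀ t ∈ Set.Icc 0 τ, HasDerivAt (fun x => w x t) (wr r t) r)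
    (hwt : ∀ r ∈ Set.Icc 0 R, ∀ t ∈ Set.Icc 0 τ, HasDerivAt (fun x => w r x) (wt r t) t)
    (hG : ∀ r ∈ Set.Ico 0 R, ∀ t ∈ Set.Icc 0 τ,
      HasDerivAt (fun x => Real.sinh x * wr x t) (Real.sinh r * G r t) r)
    (hGc : ∀ t ∈ Set.Icc 0 τ, ContinuousOn (fun r => G r t) (Set.Ico 0 R))
    (hinit : ∀ r ∈ Set.Icc 0 R, 0 ≤ w r 0)
    (hev : ∀ r ∈ Set.Ico 0 R, ∀ t ∈ Set.Ioc 0 τ, w r t < 0 →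
      ∃ a, 0 ≤ a ∧ a ≤ a0 ∧ a * G r t + C * w r t ≤ wt r t)
    (hb : ∀ t ∈ Set.Ioc 0 τ, w R t < 0 → C * w R t ≤ wr R t) :
    ∀ r ∈ Set.Icc 0 R, ∀ t ∈ Set.Icc 0 τ, 0 ≤ w r t := by
  intro r1 hr1 t1 ht1
  by_contra hneg
  push Not at hneg
  have hsR : 0 < Real.sinh R := Real.sinh_pos_iff.2 hR
  set A := (C + 1) / Real.sinh R with hA
  have hApos : 0 < A := by positivity
  have hAs : A * Real.sinh R = C + 1 := by rw [hA]; field_simp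
  set L := 2 * A * Real.cosh R + A ^ 2 * Real.sinh R ^ 2 with hL
  set K := a0 * L + C + 1 with hK
  set f : ℝ × ℝ → ℝ := fun x => Real.exp (-(K * x.2)) * Real.exp (-(A * Real.cosh x.1)) * w x.1 x.2
    with hf
  have hfc : ContinuousOn f (Set.Icc 0 R ×ˢ Set.Icc 0 τ) := by
    apply ContinuousOn.mul _ hcont
    apply Continuous.continuousOn
    fun_prop
  obtain ⟨⟨rs, ts⟩, hmem, hmin⟩ :=
    (isCompact_Icc.prod isCompact_Icc).exists_isMinOn ⟨(r1, t1), Set.mk_mem_prod hr1 ht1⟩ hfc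
  obtain ⟨hrs, hts⟩ := hmem
  simp only at hrs hts
  have hfneg : f (rs, ts) < 0 := by
    have : f (rs, ts) ≤ f (r1, t1) := hmin (Set.mk_mem_prod hr1 ht1)
    have h2 : f (r1, t1) < 0 := mul_neg_of_pos_of_neg (by positivity) hneg
    linarith
  obtain ⟨m, hm⟩ : ∃ m, m = - f (rs, ts) := ⟨_, rfl⟩
  have hmpos : 0 < m := by linarith
  have key : ∀ r ∈ Set.Icc 0 R, ∀ t ∈ Set.Icc 0 τ,
      0 ≤ w r t + m * Real.exp (K * t) * Real.exp (A * Real.cosh r) := by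
    intro r hr t ht
    have : f (rs, ts) ≤ f (r, t) := hmin (Set.mk_mem_prod hr ht)
    have h2 : 0 ≤ f (r, t) + m := by linarith
    have e1 : Real.exp (K * t) * Real.exp (-(K * t)) = 1 := by rw [← Real.exp_add]; simp
    have e2 : Real.exp (A * Real.cosh r) * Real.exp (-(A * Real.cosh r)) = 1 := by
      rw [← Real.exp_add]; simp
    have h3 : w r t + m * Real.exp (K * t) * Real.exp (A * Real.cosh r)
      = (Real.exp (K * t) * Real.exp (A * Real.cosh r)) * (f (r, t) + m) := by
      simp only [hf]
      linear_combination (-(w r t) * Real.exp (A * Real.cosh r) * Real.exp (-(A * Real.cosh r))) * e1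
        - w r t * e2
    rw [h3]; positivity
  have keq : w rs ts + m * Real.exp (K * ts) * Real.exp (A * Real.cosh rs) = 0 := by
    have e1 : Real.exp (K * ts) * Real.exp (-(K * ts)) = 1 := by rw [← Real.exp_add]; simp
    have e2 : Real.exp (A * Real.cosh rs) * Real.exp (-(A * Real.cosh rs)) = 1 := by
      rw [← Real.exp_add]; simp
    rw [hm]
    simp only [hf]
    linear_combination (-(w rs ts) * Real.exp (A * Real.cosh rs) * Real.exp (-(A * Real.cosh rs))) * e1
        - w rs ts * e2
  have hwneg : w rs ts < 0 := by
    have : 0 < m * Real.exp (K * ts) * Real.exp (A * Real.cosh rs) := by positivity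
    linarith
  have htpos : 0 < ts := by
    rcases hts.1.lt_or_eq with h | h
    · exact h
    · rw [← h] at hwneg
      linarith [hinit rs hrs]
  set Q := m * Real.exp (K * ts) with hQ
  have hQpos : 0 < Q := by positivity
  -- barrier derivative
  have hψ : ∀ x, HasDerivAt (fun x => Real.exp (A * Real.cosh x))
      (A * Real.sinh x * Real.exp (A * Real.cosh x)) x := by
    intro x
    have := ((Real.hasDerivAt_cosh x).const_mul A).exp
    convert this using 1; ring
  have hh : ∀ x ∈ Set.Icc 0 R, HasDerivAt (fun x => w x ts + Q * Real.exp (A * Real.cosh x))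
      (wr x ts + Q * (A * Real.sinh x * Real.exp (A * Real.cosh x))) x := fun x hx =>
    (hwr x hx ts hts).add ((hψ x).const_mul Q)
  rcases hrs.2.lt_or_eq with hlt | heq
  · -- interior
    have hG0 : 0 ≤ G rs ts + Q * ((2 * A * Real.cosh rs + A ^ 2 * Real.sinh rs ^ 2) *
        Real.exp (A * Real.cosh rs)) := by
      apply lap_nonneg R rs (fun x => w x ts + Q * Real.exp (A * Real.cosh x))
        (fun x => wr x ts + Q * (A * Real.sinh x * Real.exp (A * Real.cosh x)))
        (fun x => G x ts + Q * ((2 * A * Real.cosh x + A ^ 2 * Real.sinh x ^ 2) *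
        Real.exp (A * Real.cosh x))) hrs.1 hlt hh
      · intro x hx
        have h1 := hG x hx ts hts
        have h2 := ((((Real.hasDerivAt_sinh x).pow 2).const_mul A).mul (hψ x)).const_mul Q
        have h3 := h1.add h2
        have h4 : HasDerivAt (fun x => Real.sinh x *
            (wr x ts + Q * (A * Real.sinh x * Real.exp (A * Real.cosh x)))) _ x :=
          h3.congr_of_eventuallyEq (Eventually.of_forall fun y => by
            simp only [Pi.add_apply, Pi.mul_apply, Pi.pow_apply]; ring)
        refine h4.congr_deriv ?_
        simp only [Pi.pow_apply, Nat.cast_ofNat]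
        ring
      · apply (hGc ts hts).add
        apply Continuous.continuousOn
        fun_prop
      · intro x hx
        have := key x hx ts hts
        rw [keq]; exact this
      · rcases hrs.1.lt_or_eq with h | h
        · have hloc : IsLocalMin (fun x => w x ts + Q * Real.exp (A * Real.cosh x)) rs := by
            filter_upwards [Icc_mem_nhds h hlt] with x hx
            have := key x hx ts hts
            rw [keq]; exact this
          rw [hloc.hasDerivAt_eq_zero (hh rs hrs)]; simp
        · rw [← h]; simp
    have hT : wt rs ts + m * (K * Real.exp (K * ts)) * Real.exp (A * Real.cosh rs) ≤ 0 := by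
      apply deriv_nonpos_left
        (fun t => w rs t + m * Real.exp (K * t) * Real.exp (A * Real.cosh rs)) _ 0 ts htpos
      · apply (hwt rs hrs ts hts).add
        apply HasDerivAt.mul_const
        apply HasDerivAt.const_mul
        have := ((hasDerivAt_id ts).const_mul K).exp
        refine this.congr_deriv ?_
        simp only [id]; ring
      · intro t ht
        rw [keq]; exact key rs hrs t ⟨ht.1, ht.2.trans hts.2⟩
    obtain ⟨a, ha, ha', hin⟩ := hev rs ⟨hrs.1, hlt⟩ ts ⟨htpos, hts.2⟩ hwneg
    set E := Real.exp (A * Real.cosh rs) with hE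
    have hEpos : 0 < E := Real.exp_pos _
    have hw : w rs ts = -(Q * E) := by linarith
    have hl : 2 * A * Real.cosh rs + A ^ 2 * Real.sinh rs ^ 2 ≤ L := by
      have c1 : Real.cosh rs ≤ Real.cosh R := by
        rw [Real.cosh_le_cosh, abs_of_nonneg hrs.1, abs_of_pos hR]; exact hrs.2
      have c2 : Real.sinh rs ≤ Real.sinh R := Real.sinh_le_sinh.2 hrs.2
      have c3 : 0 ≤ Real.sinh rs := Real.sinh_nonneg_iff.2 hrs.1
      rw [hL]; gcongr
    have hl0 : 0 ≤ 2 * A * Real.cosh rs + A ^ 2 * Real.sinh rs ^ 2 := by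
      have := Real.cosh_pos rs
      positivity
    set l := 2 * A * Real.cosh rs + A ^ 2 * Real.sinh rs ^ 2 with hldef
    have f1 : a * G rs ts ≥ - (a * l) * (Q * E) := by
      have := mul_nonneg ha hG0
      linarith
    have f2 : a * l ≤ a0 * L := mul_le_mul ha' hl hl0 ha0
    have f3 : a * l * (Q * E) ≤ a0 * L * (Q * E) := by gcongr
    have f4 : m * (K * Real.exp (K * ts)) * E = K * (Q * E) := by rw [hQ]; ring
    rw [f4, hK] at hT
    rw [hw] at hin
    have : 0 < Q * E := by positivity
    nlinarith
  · rw [heq] at hwneg keq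
    have hB : wr R ts + Q * (A * Real.sinh R * Real.exp (A * Real.cosh R)) ≤ 0 := by
      apply deriv_nonpos_left (fun x => w x ts + Q * Real.exp (A * Real.cosh x)) _ 0 R hR
      · exact hh R ⟨hR.le, le_refl R⟩
      · intro x hx
        rw [keq]; exact key x hx ts hts
    have := hb ts ⟨htpos, hts.2⟩ hwneg
    have hw : w R ts = -(Q * Real.exp (A * Real.cosh R)) := by linarith
    rw [hAs] at hB
    rw [hw] at this
    have : 0 < Q * Real.exp (A * Real.cosh R) := by positivity
    nlinarith

structure Reg (R τ : ℝ) (p dp tp F : ℝ → ℝ → ℝ) : Prop where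
  cont : ContinuousOn (fun x : ℝ × ℝ => p x.1 x.2) (Set.Icc 0 R ×ˢ Set.Icc 0 τ)
  dr : ∀ r ∈ Set.Icc 0 R, ∀ t ∈ Set.Icc 0 τ, HasDerivAt (fun x => p x t) (dp r t) r
  dt : ∀ r ∈ Set.Icc 0 R, ∀ t ∈ Set.Icc 0 τ, HasDerivAt (fun x => p r x) (tp r t) t
  lap : ∀ r ∈ Set.Ico 0 R, ∀ t ∈ Set.Icc 0 τ,
      HasDerivAt (fun x => Real.sinh x * dp x t) (Real.sinh r * F r t) r
  lapc : ∀ t ∈ Set.Icc 0 τ, ContinuousOn (fun r => F r t) (Set.Ico 0 R)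

lemma comparison (R τ : ℝ) (hR : 0 < R) (p dp tp F q dq tq H : ℝ → ℝ → ℝ)
    (rp : Reg R τ p dp tp F) (rq : Reg R τ q dq tq H)
    (hp : ∀ r ∈ Set.Ico 0 R, ∀ t ∈ Set.Ioc 0 τ,
      tp r t ≤ Real.exp (-2 * p r t) * (F r t + 1) - 1)
    (hq : ∀ r ∈ Set.Ico 0 R, ∀ t ∈ Set.Ioc 0 τ,
      Real.exp (-2 * q r t) * (H r t + 1) - 1 ≤ tq r t)
    (hA : ∃ A : ℝ, ∀ r ∈ Set.Ico 0 R, ∀ t ∈ Set.Ioc 0 τ, -A ≤ F r t + 1)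
    (hinit : ∀ r ∈ Set.Icc 0 R, p r 0 ≤ q r 0)
    (hb : ∃ C : ℝ, ∀ t ∈ Set.Ioc 0 τ, q R t < p R t →
      C * (q R t - p R t) ≤ dq R t - dp R t) :
    ∀ r ∈ Set.Icc 0 R, ∀ t ∈ Set.Icc 0 τ, p r t ≤ q r t := by
  obtain ⟨A, hA⟩ := hA
  obtain ⟨C, hb⟩ := hb
  obtain ⟨M, hM⟩ := ((isCompact_Icc (a := (0:ℝ)) (b := R)).prod
    (isCompact_Icc (a := (0:ℝ)) (b := τ))).bddBelow_image rq.cont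
  have hM' : ∀ r ∈ Set.Icc 0 R, ∀ t ∈ Set.Icc 0 τ, M ≤ q r t := fun r hr t ht =>
    hM (Set.mem_image_of_mem (fun x : ℝ × ℝ => q x.1 x.2) (Set.mk_mem_prod hr ht))
  set a0 := Real.exp (-2 * M) with ha0
  set C' := 2 * |A| * a0 + |C| with hC'
  have hC'C : C ≤ C' := by
    have : 0 ≤ 2 * |A| * a0 := by positivity
    linarith [le_abs_self C]
  have main := min_principle_s19 R τ a0 C' hR (by positivity) (by positivity)
    (fun r t => q r t - p r t) (fun r t => dq r t - dp r t) (fun r t => tq r t - tp r t)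
    (fun r t => H r t - F r t) (rq.cont.sub rp.cont)
    (fun r hr t ht => (rq.dr r hr t ht).sub (rp.dr r hr t ht))
    (fun r hr t ht => (rq.dt r hr t ht).sub (rp.dt r hr t ht))
    (fun r hr t ht => by
      have h3 := (rq.lap r hr t ht).sub (rp.lap r hr t ht)
      have h4 : HasDerivAt (fun x => Real.sinh x * (dq x t - dp x t)) _ r :=
        h3.congr_of_eventuallyEq (Eventually.of_forall fun y => by
            simp only [Pi.sub_apply]; ring)
      refine h4.congr_deriv ?_
      ring)
    (fun t ht => (rq.lapc t ht).sub (rp.lapc t ht))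
    (fun r hr => by linarith [hinit r hr])
    (fun r hr t ht hw => by
      refine ⟨Real.exp (-2 * q r t), by positivity, ?_, ?_⟩
      · apply Real.exp_le_exp.2
        linarith [hM' r ⟨hr.1, hr.2.le⟩ t ⟨ht.1.le, ht.2⟩]
      · have h1 := hp r hr t ht
        have h2 := hq r hr t ht
        have h3 := hA r hr t ht
        have hqM : Real.exp (-2 * q r t) ≤ a0 := by
          apply Real.exp_le_exp.2
          linarith [hM' r ⟨hr.1, hr.2.le⟩ t ⟨ht.1.le, ht.2⟩]
        set eq := Real.exp (-2 * q r t) with heq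
        set ep := Real.exp (-2 * p r t) with hep
        have heqp : 0 < eq := Real.exp_pos _
        have h4 : eq - ep ≤ 2 * eq * (p r t - q r t) := by
          have e1 : ep = eq * Real.exp (2 * (q r t - p r t)) := by
            rw [heq, hep, ← Real.exp_add]; ring_nf
          have e2 := Real.add_one_le_exp (2 * (q r t - p r t))
          rw [e1]
          nlinarith
        have h5 : 0 ≤ eq - ep := by
          have : ep ≤ eq := Real.exp_le_exp.2 (by linarith)
          linarith
        have h6 : (eq - ep) * (F r t + 1) ≥ - (2 * |A| * a0 * (p r t - q r t)) := by
          have g1 : (eq - ep) * (F r t + 1) ≥ (eq - ep) * (-|A|) :=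
            mul_le_mul_of_nonneg_left (by linarith [le_abs_self A]) h5
          have g2 : (eq - ep) * |A| ≤ 2 * eq * (p r t - q r t) * |A| :=
            mul_le_mul_of_nonneg_right h4 (abs_nonneg A)
          have g3 : 2 * eq * (p r t - q r t) * |A| ≤ 2 * a0 * (p r t - q r t) * |A| := by
            have : 0 ≤ p r t - q r t := by linarith
            gcongr
          linarith
        have h7 : |C| * (q r t - p r t) ≤ 0 := mul_nonpos_of_nonneg_of_nonpos (abs_nonneg C) hw.le
        rw [hC']
        nlinarith)
    (fun t ht hw => by
      have := hb t ht (by linarith)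
      have h2 : C' * (q R t - p R t) ≤ C * (q R t - p R t) :=
        mul_le_mul_of_nonpos_right hC'C hw.le
      linarith)
  intro r hr t ht
  linarith [main r hr t ht]

lemma robin (R τ c : ℝ) (hR : 0 < R) (p dp tp F q dq tq H : ℝ → ℝ → ℝ) (k : ℝ → ℝ) (k0 : ℝ)
    (rp : Reg R τ p dp tp F) (_rq : Reg R τ q dq tq H)
    (hk : ∀ t ∈ Set.Ioc 0 τ, 0 ≤ k t ∧ k t ≤ k0)
    (hp : ∀ t ∈ Set.Ioc 0 τ, dp R t + c ≤ k t * Real.exp (p R t))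
    (hq : ∀ t ∈ Set.Ioc 0 τ, k t * Real.exp (q R t) ≤ dq R t + c) :
    ∃ C : ℝ, ∀ t ∈ Set.Ioc 0 τ, q R t < p R t →
      C * (q R t - p R t) ≤ dq R t - dp R t := by
  obtain ⟨M, hM⟩ := ((isCompact_Icc (a := (0:ℝ)) (b := R)).prod
    (isCompact_Icc (a := (0:ℝ)) (b := τ))).bddAbove_image rp.cont
  have hM' : ∀ r ∈ Set.Icc 0 R, ∀ t ∈ Set.Icc 0 τ, p r t ≤ M := fun r hr t ht =>
    hM (Set.mem_image_of_mem (fun x : ℝ × ℝ => p x.1 x.2) (Set.mk_mem_prod hr ht))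
  refine ⟨k0 * Real.exp M, fun t ht hlt => ?_⟩
  obtain ⟨hk1, hk2⟩ := hk t ht
  have h1 := hp t ht
  have h2 := hq t ht
  have h3 : Real.exp (p R t) - Real.exp (q R t) ≤ Real.exp M * (p R t - q R t) := by
    have e1 : Real.exp (q R t) = Real.exp (p R t) * Real.exp (q R t - p R t) := by
      rw [← Real.exp_add]; ring_nf
    have e2 := Real.add_one_le_exp (q R t - p R t)
    have e3 : Real.exp (p R t) ≤ Real.exp M :=
      Real.exp_le_exp.2 (hM' R ⟨hR.le, le_refl R⟩ t ⟨ht.1.le, ht.2⟩)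
    have e4 : Real.exp (p R t) * (q R t - p R t + 1) ≤ Real.exp (q R t) := by
      rw [e1]; gcongr
    have e5 : Real.exp (p R t) * (p R t - q R t) ≤ Real.exp M * (p R t - q R t) :=
      mul_le_mul_of_nonneg_right e3 (by linarith)
    linarith
  have h4 : k t * (Real.exp (p R t) - Real.exp (q R t)) ≤ k0 * (Real.exp M * (p R t - q R t)) := by
    have : Real.exp (q R t) ≤ Real.exp (p R t) := Real.exp_le_exp.2 hlt.le
    apply mul_le_mul hk2 h3 (by linarith) (by linarith)
  linarith

/-- regularity of the flow, shifted by `h` in time -/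
lemma reg_u {r₀ : ℝ} {u : ℝ → ℝ → ℝ} {η : ℝ → ℝ} (S : Setup2 r₀ ⊤ u η) (R τ h : ℝ)
    (hR : R ≤ r₀) (hh : 0 ≤ h) :
    Reg R τ (fun r t => u r (h + t)) (fun r t => pr u r (h + t)) (fun r t => pt u r (h + t))
      (fun r t => Real.exp (2 * u r (h + t)) * (pt u r (h + t) + 1) - 1) := by
  have hs := S.hu_smooth
  have hs1 : ∀ t, ContDiff ℝ (⊤ : ℕ∞) (fun x => u x t) := fun t =>
    hs.comp (contDiff_id.prodMk contDiff_const)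
  have hs2 : ∀ r, ContDiff ℝ (⊤ : ℕ∞) (fun x => u r x) := fun r =>
    hs.comp (contDiff_const.prodMk contDiff_id)
  have hne : (((⊤ : ℕ∞) : WithTop ℕ∞)) ≠ 0 := by simp
  have hdr : ∀ r t, HasDerivAt (fun x => u x t) (pr u r t) r := fun r t =>
    ((hs1 t).differentiable hne r).hasDerivAt
  have hdt : ∀ r t, HasDerivAt (fun x => u r x) (pt u r t) t := fun r t =>
    ((hs2 r).differentiable hne t).hasDerivAt
  have hdrr : ∀ t, Differentiable ℝ (fun x => pr u x t) := by
    intro t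
    have : ContDiff ℝ 1 (deriv (fun x => u x t)) := by
      have h2 : ContDiff ℝ (1 + 1) (fun x => u x t) := (hs1 t).of_le (by
        have : (((1 + 1 : ℕ∞)) : WithTop ℕ∞) ≤ ((⊤ : ℕ∞) : WithTop ℕ∞) :=
          WithTop.coe_le_coe.2 le_top
        simpa using this)
      exact (contDiff_succ_iff_deriv.1 h2).2.2
    exact this.differentiable (by simp)
  have hptc : ∀ t, Continuous (fun r => pt u r t) := by
    intro t
    have e : (fun r => pt u r t) = fun r => fderiv ℝ (Function.uncurry u) (r, t) (0, 1) := by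
      ext r
      have h1 : HasFDerivAt (Function.uncurry u) (fderiv ℝ (Function.uncurry u) (r, t)) (r, t) :=
        (hs.differentiable hne (r, t)).hasFDerivAt
      have h2 : HasDerivAt (fun x : ℝ => (r, x)) ((0 : ℝ), (1 : ℝ)) t :=
        (hasDerivAt_const t r).prodMk (hasDerivAt_id t)
      have h3 := h1.comp_hasDerivAt t h2
      exact h3.deriv
    rw [e]
    have hc : Continuous (fderiv ℝ (Function.uncurry u)) := hs.continuous_fderiv hne
    exact (hc.comp (by fun_prop : Continuous fun r : ℝ => (r, t))).clm_apply continuous_const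
  refine ⟨?_, ?_, ?_, ?_, ?_⟩
  · apply Continuous.continuousOn
    exact hs.continuous.comp (by fun_prop : Continuous fun x : ℝ × ℝ => (x.1, h + x.2))
  · intro r _ t _
    exact hdr r (h + t)
  · intro r _ t _
    exact (hdt r (h + t)).comp_const_add h t
  · intro r hr t ht
    have h1 := (Real.hasDerivAt_sinh r).mul ((hdrr (h + t)) r).hasDerivAt
    refine h1.congr_deriv ?_
    rcases hr.1.lt_or_eq with hr0 | hr0
    · have h2 := S.hu_evol r (h + t) ⟨hr0, by linarith [hr.2]⟩ (by linarith [ht.1])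
        (EReal.coe_lt_top _)
      rw [h2]
      have hsp := Real.sinh_pos_iff.2 hr0
      have e1 : Real.exp (2 * u r (h + t)) * Real.exp (-2 * u r (h + t)) = 1 := by
        rw [← Real.exp_add]; simp
      have e2 : Real.sinh r * (Real.cosh r / Real.sinh r) = Real.cosh r := by field_simp
      set D := deriv (fun x => pr u x (h + t)) r
      set P := pr u r (h + t)
      linear_combination (-(Real.sinh r) * (D + Real.cosh r / Real.sinh r * P + 1)) * e1 - P * e2
    · subst hr0
      rw [S.hu_origin (h + t) (by linarith [ht.1]) (EReal.coe_lt_top _)]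
      simp
  · intro t _
    apply Continuous.continuousOn
    have := hptc (h + t)
    have h2 := (hs1 (h + t)).continuous
    fun_prop

lemma lower_u {r₀ : ℝ} {u : ℝ → ℝ → ℝ} {η : ℝ → ℝ} (S : Setup2 r₀ ⊤ u η) (R τ : ℝ) :
    ∃ A : ℝ, ∀ r ∈ Set.Ico 0 R, ∀ t ∈ Set.Ioc 0 τ,
      -A ≤ Real.exp (2 * u r (0 + t)) * (pt u r (0 + t) + 1) - 1 + 1 := by
  have hs := S.hu_smooth
  have hne : (((⊤ : ℕ∞) : WithTop ℕ∞)) ≠ 0 := by simp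
  have e : ∀ r t, pt u r t = fderiv ℝ (Function.uncurry u) (r, t) (0, 1) := by
      intro r t
      have h1 : HasFDerivAt (Function.uncurry u) (fderiv ℝ (Function.uncurry u) (r, t)) (r, t) :=
        (hs.differentiable hne (r, t)).hasFDerivAt
      have h2 : HasDerivAt (fun x : ℝ => (r, x)) ((0 : ℝ), (1 : ℝ)) t :=
        (hasDerivAt_const t r).prodMk (hasDerivAt_id t)
      have h3 := h1.comp_hasDerivAt t h2
      exact h3.deriv
  have hc1 : Continuous (fun x : ℝ × ℝ => pt u x.1 x.2) := by
    simp only [e]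
    have hc : Continuous (fderiv ℝ (Function.uncurry u)) := hs.continuous_fderiv hne
    exact hc.clm_apply continuous_const
  have hc2 : Continuous (fun x : ℝ × ℝ => u x.1 x.2) := hs.continuous
  have hc : Continuous (fun x : ℝ × ℝ =>
      Real.exp (2 * u x.1 x.2) * (pt u x.1 x.2 + 1) - 1 + 1) := by fun_prop
  obtain ⟨M, hM⟩ := ((isCompact_Icc (a := (0:ℝ)) (b := R)).prod
    (isCompact_Icc (a := (0:ℝ)) (b := τ))).bddBelow_image hc.continuousOn
  refine ⟨-M, fun r hr t ht => ?_⟩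
  rw [neg_neg, zero_add]
  have hmem : ((r, t) : ℝ × ℝ) ∈ Set.Icc 0 R ×ˢ Set.Icc 0 τ :=
    ⟨⟨hr.1, hr.2.le⟩, ⟨ht.1.le, ht.2⟩⟩
  exact hM (Set.mem_image_of_mem (fun x : ℝ × ℝ =>
      Real.exp (2 * u x.1 x.2) * (pt u x.1 x.2 + 1) - 1 + 1) hmem)

lemma pde_u (a b : ℝ) : b = Real.exp (-2 * a) * ((Real.exp (2 * a) * (b + 1) - 1) + 1) - 1 := by
  have e1 : Real.exp (2 * a) * Real.exp (-2 * a) = 1 := by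
    rw [← Real.exp_add]; simp
  linear_combination (-(b + 1)) * e1

/-- regularity of explicit profiles -/
lemma reg_v (R τ : ℝ) (b s b' s' : ℝ → ℝ) (hR : 0 < R)
    (hb : ∀ t ∈ Set.Icc 0 τ, HasDerivAt b (b' t) t)
    (hs : ∀ t ∈ Set.Icc 0 τ, HasDerivAt s (s' t) t)
    (hbR : ∀ t ∈ Set.Icc 0 τ, Real.cosh R < b t) (hs0 : ∀ t ∈ Set.Icc 0 τ, 0 < s t) :
    Reg R τ (fun r t => Real.log (b t ^ 2 - 1) / 2 - Real.log (b t - Real.cosh r) - Real.log (s t))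
      (fun r t => Real.sinh r / (b t - Real.cosh r))
      (fun r t => b t * b' t / (b t ^ 2 - 1) - b' t / (b t - Real.cosh r) - s' t / s t)
      (fun r t => (b t ^ 2 - 1) / (b t - Real.cosh r) ^ 2 - 1) := by
  have hc : ∀ r ∈ Set.Icc 0 R, Real.cosh r ≤ Real.cosh R := by
    intro r hr
    rw [Real.cosh_le_cosh, abs_of_nonneg hr.1, abs_of_pos hR]; exact hr.2
  have hpos : ∀ r ∈ Set.Icc 0 R, ∀ t ∈ Set.Icc 0 τ, 0 < b t - Real.cosh r := by
    intro r hr t ht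
    linarith [hc r hr, hbR t ht]
  have hpos2 : ∀ t ∈ Set.Icc 0 τ, 0 < b t ^ 2 - 1 := by
    intro t ht
    nlinarith [hbR t ht, Real.one_le_cosh R]
  have hbc : ContinuousOn (fun x : ℝ × ℝ => b x.2) (Set.Icc 0 R ×ˢ Set.Icc 0 τ) := by
    have : ContinuousOn b (Set.Icc 0 τ) := fun t ht => (hb t ht).continuousAt.continuousWithinAt
    exact this.comp continuous_snd.continuousOn (fun x hx => hx.2)
  have hsc : ContinuousOn (fun x : ℝ × ℝ => s x.2) (Set.Icc 0 R ×ˢ Set.Icc 0 τ) := by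
    have : ContinuousOn s (Set.Icc 0 τ) := fun t ht => (hs t ht).continuousAt.continuousWithinAt
    exact this.comp continuous_snd.continuousOn (fun x hx => hx.2)
  refine ⟨?_, ?_, ?_, ?_, ?_⟩
  · refine ((ContinuousOn.div_const ?_ _).sub ?_).sub ?_
    · apply ContinuousOn.log ((hbc.pow 2).sub continuousOn_const)
      exact fun x hx => (hpos2 x.2 hx.2).ne'
    · apply ContinuousOn.log (hbc.sub (Continuous.continuousOn (by fun_prop)))
      exact fun x hx => (hpos x.1 hx.1 x.2 hx.2).ne'
    · apply ContinuousOn.log hsc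
      exact fun x hx => (hs0 x.2 hx.2).ne'
  · intro r hr t ht
    have h1 := ((Real.hasDerivAt_cosh r).const_sub (b t)).log (hpos r hr t ht).ne'
    have h2 := (h1.const_sub (Real.log (b t ^ 2 - 1) / 2)).sub_const (Real.log (s t))
    refine h2.congr_deriv ?_
    ring
  · intro r hr t ht
    have h1 := ((hb t ht).sub_const (Real.cosh r)).log (hpos r hr t ht).ne'
    have h2 := (((hb t ht).pow 2).sub_const 1).log (hpos2 t ht).ne'
    have h3 := (hs t ht).log (hs0 t ht).ne'
    have h4 := ((h2.div_const 2).sub h1).sub h3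
    refine h4.congr_deriv ?_
    simp only [Pi.pow_apply, Nat.cast_ofNat]
    ring
  · intro r hr t ht
    have hp := hpos r ⟨hr.1, hr.2.le⟩ t ht
    have h1 := (Real.hasDerivAt_sinh r).mul ((Real.hasDerivAt_sinh r).div
      ((Real.hasDerivAt_cosh r).const_sub (b t)) hp.ne')
    refine h1.congr_deriv ?_
    simp only [Pi.div_apply]
    have := Real.cosh_sq r
    field_simp
    linear_combination (-Real.sinh r) * this
  · intro t ht
    apply ContinuousOn.sub _ continuousOn_const
    apply ContinuousOn.div continuousOn_const (Continuous.continuousOn (by fun_prop))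
    intro r hr
    exact (pow_pos (hpos r ⟨hr.1, hr.2.le⟩ t ht) 2).ne'

lemma pde_v (b s c : ℝ) (hb : 0 < b ^ 2 - 1) (hs : 0 < s) (hc : 0 < b - c) :
    Real.exp (-2 * (Real.log (b ^ 2 - 1) / 2 - Real.log (b - c) - Real.log s))
      * ((b ^ 2 - 1) / (b - c) ^ 2 - 1 + 1) - 1 = s ^ 2 - 1 := by
  have : Real.exp (-2 * (Real.log (b ^ 2 - 1) / 2 - Real.log (b - c) - Real.log s))
      = (b ^ 2 - 1)⁻¹ * (b - c) ^ 2 * s ^ 2 := by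
    have h : -2 * (Real.log (b ^ 2 - 1) / 2 - Real.log (b - c) - Real.log s)
      = - Real.log (b ^ 2 - 1) + (Real.log (b - c) + Real.log (b - c)) + (Real.log s + Real.log s) := by
      ring
    rw [h]
    simp only [Real.exp_add, Real.exp_neg, Real.exp_log hb, Real.exp_log hs, Real.exp_log hc]
    ring
  rw [this]
  field_simp
  ring

lemma u_nonneg {r₀ : ℝ} {u : ℝ → ℝ → ℝ} {η : ℝ → ℝ} (S : Setup2 r₀ ⊤ u η) :
    ∀ r ∈ Set.Icc 0 r₀, ∀ t, 0 ≤ t → 0 ≤ u r t := by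
  intro r hr t ht
  have hr0 := S.hr₀
  have hco : 0 < Real.cosh r₀ / Real.sinh r₀ :=
    div_pos (Real.cosh_pos _) (Real.sinh_pos_iff.2 hr0)
  have hz : Reg r₀ t (fun _ _ => (0:ℝ)) (fun _ _ => 0) (fun _ _ => 0) (fun _ _ => 0) := by
    refine ⟨continuousOn_const, fun r _ t _ => hasDerivAt_const _ _,
      fun r _ t _ => hasDerivAt_const _ _, fun r _ t _ => ?_, fun _ _ => continuousOn_const⟩
    simp only [mul_zero]
    exact hasDerivAt_const _ _
  have hu := reg_u S r₀ t 0 le_rfl le_rfl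
  have := comparison r₀ t hr0 _ _ _ _ _ _ _ _ hz hu (fun r _ t _ => by simp)
    (fun r _ t _ => (pde_u _ _).symm.le) ⟨0, fun r _ t _ => by norm_num⟩
    (fun r hr => by simp [S.hu_init r hr])
    (robin r₀ t (Real.cosh r₀ / Real.sinh r₀) hr0 _ _ _ _ _ _ _ _
      (fun _ => Real.cosh r₀ / Real.sinh r₀) (Real.cosh r₀ / Real.sinh r₀)
      hz hu (fun t _ => ⟨hco.le, le_rfl⟩) (fun t _ => by simp)
      (fun t ht => by
        rw [S.hbdry (0 + t) (by linarith [ht.1]) (EReal.coe_lt_top _), ← S.hη_init]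
        have := S.hη_mono 0 (0 + t) le_rfl (by linarith [ht.1])
        gcongr)) r hr t ⟨ht, le_rfl⟩
  simpa using this

lemma u_mono {r₀ : ℝ} {u : ℝ → ℝ → ℝ} {η : ℝ → ℝ} (S : Setup2 r₀ ⊤ u η) :
    ∀ r ∈ Set.Icc 0 r₀, ∀ t₁ t₂ : ℝ, 0 ≤ t₁ → t₁ ≤ t₂ → u r t₁ ≤ u r t₂ := by
  intro r hr t₁ t₂ h1 h12
  have hr0 := S.hr₀
  have hco : 0 < Real.cosh r₀ / Real.sinh r₀ :=
    div_pos (Real.cosh_pos _) (Real.sinh_pos_iff.2 hr0)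
  have hu := reg_u S r₀ t₁ 0 le_rfl le_rfl
  have hu2 := reg_u S r₀ t₁ (t₂ - t₁) le_rfl (by linarith)
  have := comparison r₀ t₁ hr0 _ _ _ _ _ _ _ _ hu hu2 (fun r _ t _ => (pde_u _ _).le)
    (fun r _ t _ => (pde_u _ _).symm.le) (lower_u S r₀ t₁)
    (fun r hr => by
      simp only [add_zero]
      rw [S.hu_init r hr]
      exact u_nonneg S r hr _ (by linarith))
    (robin r₀ t₁ (Real.cosh r₀ / Real.sinh r₀) hr0 _ _ _ _ _ _ _ _
      (fun t => η (0 + t)) (η t₁)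
      hu hu2 (fun t ht => ⟨by
          have := S.hη_mono 0 (0 + t) le_rfl (by linarith [ht.1])
          rw [S.hη_init] at this
          linarith, S.hη_mono _ _ (by linarith [ht.1]) (by linarith [ht.2])⟩)
      (fun t ht => by
        rw [S.hbdry (0 + t) (by linarith [ht.1]) (EReal.coe_lt_top _)])
      (fun t ht => by
        rw [S.hbdry (t₂ - t₁ + t) (by linarith [ht.1]) (EReal.coe_lt_top _)]
        have := S.hη_mono (0 + t) (t₂ - t₁ + t) (by linarith [ht.1]) (by linarith [ht.1])
        gcongr)) r hr t₁ ⟨h1, le_rfl⟩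
  simpa using this

lemma log_sinh_sq (r₀ : ℝ) : Real.log (Real.cosh r₀ ^ 2 - 1) / 2 = Real.log (Real.sinh r₀) := by
  have : Real.cosh r₀ ^ 2 - 1 = Real.sinh r₀ ^ 2 := by rw [Real.cosh_sq]; ring
  rw [this, Real.log_pow]; push_cast; ring

lemma u_upper {r₀ : ℝ} {u : ℝ → ℝ → ℝ} {η : ℝ → ℝ} (S : Setup2 r₀ ⊤ u η) :
    ∀ r ∈ Set.Ico 0 r₀, ∀ t, 0 ≤ t →
      u r t ≤ Real.log (Real.sinh r₀) - Real.log (Real.cosh r₀ - Real.cosh r) := by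
  intro r hr t ht
  have hr0 := S.hr₀
  have hs0 := Real.sinh_pos_iff.2 hr0
  have hu0 := reg_u S r₀ t 0 le_rfl le_rfl
  obtain ⟨M, hM⟩ := ((isCompact_Icc (a := (0:ℝ)) (b := r₀)).prod
    (isCompact_Icc (a := (0:ℝ)) (b := t))).bddAbove_image hu0.cont
  have hM' : ∀ r ∈ Set.Icc 0 r₀, ∀ t' ∈ Set.Icc 0 t, u r (0 + t') ≤ M := fun r hr t' ht =>
    hM (Set.mem_image_of_mem (fun x : ℝ × ℝ => u x.1 (0 + x.2)) (Set.mk_mem_prod hr ht))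
  have hev : ∀ᶠ R in nhdsWithin r₀ (Set.Iio r₀),
      Real.cosh r₀ - Real.cosh R < Real.sinh r₀ * Real.exp (-M) := by
    have hc : Continuous fun R => Real.cosh r₀ - Real.cosh R := by fun_prop
    have h1 : Tendsto (fun R => Real.cosh r₀ - Real.cosh R) (nhdsWithin r₀ (Set.Iio r₀))
        (nhds (Real.cosh r₀ - Real.cosh r₀)) := (hc.tendsto r₀).mono_left nhdsWithin_le_nhds
    apply h1.eventually_lt_const
    rw [sub_self]; positivity
  obtain ⟨R, hR1, hrR, hRr⟩ := (hev.and (Ioo_mem_nhdsLT hr.2)).exists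
  have hRpos : 0 < R := by linarith [hr.1]
  have hcR : Real.cosh R < Real.cosh r₀ := by
    rw [Real.cosh_lt_cosh, abs_of_pos hRpos, abs_of_pos hr0]; exact hRr
  have hc0 : 0 < Real.cosh r₀ ^ 2 - 1 := by
    have : Real.cosh r₀ ^ 2 - 1 = Real.sinh r₀ ^ 2 := by rw [Real.cosh_sq]; ring
    rw [this]; positivity
  have hcr : ∀ r ∈ Set.Icc 0 R, 0 < Real.cosh r₀ - Real.cosh r := by
    intro r hr
    have : Real.cosh r ≤ Real.cosh R := by
      rw [Real.cosh_le_cosh, abs_of_nonneg hr.1, abs_of_pos hRpos]; exact hr.2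
    linarith
  have hu := reg_u S R t 0 hRr.le le_rfl
  have hv := reg_v R t (fun _ => Real.cosh r₀) (fun _ => 1) (fun _ => 0) (fun _ => 0) hRpos
    (fun t _ => hasDerivAt_const _ _) (fun t _ => hasDerivAt_const _ _) (fun _ _ => hcR)
    (fun _ _ => one_pos)
  have := comparison R t hRpos _ _ _ _ _ _ _ _ hu hv (fun r _ t _ => (pde_u _ _).le)
    (fun r hr t _ => by
      rw [pde_v _ _ _ hc0 one_pos (hcr r ⟨hr.1, hr.2.le⟩)]; simp)
    (lower_u S R t)
    (fun r hr => by
      simp only [add_zero]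
      rw [S.hu_init r ⟨hr.1, by linarith [hr.2]⟩, log_sinh_sq, Real.log_one, sub_zero, sub_nonneg]
      apply Real.log_le_log (hcr r hr)
      have : Real.cosh r₀ - Real.sinh r₀ = Real.exp (-r₀) := Real.cosh_sub_sinh r₀
      have h2 : Real.exp (-r₀) ≤ 1 := Real.exp_le_one_iff.2 (by linarith)
      linarith [Real.one_le_cosh r])
    ⟨0, fun t' ht' hlt => by
      exfalso
      have h1 := hM' R ⟨hRpos.le, hRr.le⟩ t' ⟨ht'.1.le, ht'.2⟩
      simp only [log_sinh_sq, Real.log_one, sub_zero] at hlt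
      have h2 := Real.log_lt_log (hcr R ⟨hRpos.le, le_rfl⟩) hR1
      rw [Real.log_mul hs0.ne' (Real.exp_pos _).ne', Real.log_exp] at h2
      linarith⟩ r ⟨hr.1, hrR.le⟩ t ⟨ht, le_rfl⟩
  simpa [log_sinh_sq] using this

lemma u_lower {r₀ : ℝ} {u : ℝ → ℝ → ℝ} {η : ℝ → ℝ} (S : Setup2 r₀ ⊤ u η) :
    ∃ t₁ δ : ℝ, 0 ≤ t₁ ∧ 0 < δ ∧ ∀ r ∈ Set.Icc 0 r₀, ∀ t, 0 ≤ t →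
      Real.log ((Real.cosh r₀ + Real.cosh r₀ / δ * (1 + δ * t)⁻¹) ^ 2 - 1) / 2
        - Real.log (Real.cosh r₀ + Real.cosh r₀ / δ * (1 + δ * t)⁻¹ - Real.cosh r)
        - Real.log (1 + δ * (1 + δ * t)⁻¹) ≤ u r (t₁ + t) := by
  have hr0 := S.hr₀
  have hs0 := Real.sinh_pos_iff.2 hr0
  have hc0 := Real.cosh_pos r₀
  have hc1 := Real.one_le_cosh r₀
  have hco : 0 < Real.cosh r₀ / Real.sinh r₀ := div_pos hc0 hs0
  obtain ⟨t0, ht0, hinc⟩ := S.hη_incr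
  have hη1 : η 0 < η (t0 / 2) := by
    have : StrictMonoOn η (Set.Icc 0 (t0 / 2)) := by
      apply strictMonoOn_of_deriv_pos (convex_Icc _ _) S.hη_smooth.continuous.continuousOn
      intro x hx
      rw [interior_Icc] at hx
      exact hinc x hx.1 (by linarith [hx.2])
    exact this ⟨le_rfl, by linarith⟩ ⟨by linarith, le_rfl⟩ (by linarith)
  rw [S.hη_init] at hη1
  obtain ⟨t₁, ht₁⟩ : ∃ t₁, t₁ = t0 / 2 := ⟨_, rfl⟩
  rw [← ht₁] at hη1
  have ht1p : 0 ≤ t₁ := by linarith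
  obtain ⟨δ, hδ⟩ : ∃ δ, δ = η t₁ / (Real.cosh r₀ / Real.sinh r₀) - 1 := ⟨_, rfl⟩
  have hδp : 0 < δ := by
    rw [hδ, sub_pos, lt_div_iff₀ hco]; linarith
  have hδη : (1 + δ) * (Real.cosh r₀ / Real.sinh r₀) = η t₁ := by
    rw [hδ]; field_simp; ring
  refine ⟨t₁, δ, ht1p, hδp, fun r hr t ht => ?_⟩
  set y : ℝ → ℝ := fun t => (1 + δ * t)⁻¹ with hy
  have hden : ∀ t, 0 ≤ t → 0 < 1 + δ * t := fun t ht => by positivity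
  have hyp : ∀ t, 0 ≤ t → 0 < y t := fun t ht => inv_pos.2 (hden t ht)
  have hy1 : ∀ t, 0 ≤ t → y t ≤ 1 := fun t ht => by
    apply inv_le_one_of_one_le₀
    nlinarith
  have hyd : ∀ t, 0 ≤ t → HasDerivAt y (-(δ * y t ^ 2)) t := by
    intro t ht
    have := (((hasDerivAt_id t).const_mul δ).const_add 1).inv (hden t ht).ne'
    refine this.congr_deriv ?_
    simp only [hy, id]
    field_simp
  set C := Real.cosh r₀ / δ with hC
  have hCp : 0 < C := by positivity
  have hCδ : C * δ = Real.cosh r₀ := by rw [hC]; field_simp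
  set b : ℝ → ℝ := fun t => Real.cosh r₀ + C * y t with hb
  set s : ℝ → ℝ := fun t => 1 + δ * y t with hs
  have hbR : ∀ t, 0 ≤ t → Real.cosh r₀ < b t := fun t ht => by
    have := mul_pos hCp (hyp t ht)
    simp only [hb]; linarith
  have hsp : ∀ t, 0 ≤ t → 1 < s t := fun t ht => by
    have := mul_pos hδp (hyp t ht)
    simp only [hs]; linarith
  have hb2 : ∀ t, 0 ≤ t → 0 < b t ^ 2 - 1 := fun t ht => by
    nlinarith [hbR t ht]
  have hcr : ∀ r ∈ Set.Icc 0 r₀, Real.cosh r ≤ Real.cosh r₀ := by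
    intro r hr
    rw [Real.cosh_le_cosh, abs_of_nonneg hr.1, abs_of_pos hr0]; exact hr.2
  have hbc : ∀ r ∈ Set.Icc 0 r₀, ∀ t, 0 ≤ t → 0 < b t - Real.cosh r := fun r hr t ht => by
    linarith [hcr r hr, hbR t ht]
  have hu := reg_u S r₀ t t₁ le_rfl ht1p
  have hv := reg_v r₀ t b s (fun t => C * (-(δ * y t ^ 2))) (fun t => δ * (-(δ * y t ^ 2))) hr0
    (fun t ht => ((hyd t ht.1).const_mul C).const_add _)
    (fun t ht => ((hyd t ht.1).const_mul δ).const_add _)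
    (fun t ht => hbR t ht.1) (fun t ht => by linarith [hsp t ht.1])
  refine comparison r₀ t hr0 _ _ _ _ _ _ _ _ hv hu ?_ (fun r _ t _ => (pde_u _ _).symm.le) ?_ ?_
    (robin r₀ t (Real.cosh r₀ / Real.sinh r₀) hr0 _ _ _ _ _ _ _ _
      (fun t => η t₁) (η t₁) hv hu (fun t ht => ⟨by linarith, le_rfl⟩) ?_ ?_) r hr t ⟨ht, le_rfl⟩
  · intro r hr t ht
    have hr' : r ∈ Set.Icc 0 r₀ := ⟨hr.1, hr.2.le⟩
    have ht0 := ht.1.le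
    have hst := hsp t ht0
    rw [pde_v _ _ _ (hb2 t ht0) (by linarith) (hbc r hr' t ht0)]
    have hD := hbc r hr' t ht0
    have hB := hb2 t ht0
    have hCy : C * y t = b t - Real.cosh r₀ := by simp only [hb]; ring
    have hyt := hyp t ht0
    have hX : (b t - Real.cosh r₀) * (b t * Real.cosh r - 1) / ((b t ^ 2 - 1) * (b t - Real.cosh r))
        ≤ 1 := by
      rw [div_le_one (by positivity), mul_comm]
      have hbt := hbR t ht0
      have hcr' := hcr r hr'
      have := Real.one_le_cosh r
      apply mul_le_mul _ (by linarith) (by linarith) hB.le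
      nlinarith
    have hZ : δ ^ 2 * y t ^ 2 / s t ≤ δ ^ 2 * y t ^ 2 := div_le_self (by positivity) hst.le
    have e1 : b t * (C * (-(δ * y t ^ 2))) / (b t ^ 2 - 1) - C * (-(δ * y t ^ 2)) / (b t - Real.cosh r)
        - δ * (-(δ * y t ^ 2)) / s t = δ * y t * ((b t - Real.cosh r₀) * (b t * Real.cosh r - 1) /
          ((b t ^ 2 - 1) * (b t - Real.cosh r))) + δ ^ 2 * y t ^ 2 / s t := by
      rw [← hCy]
      field_simp
      ring
    rw [e1]
    have h3 : δ * y t * ((b t - Real.cosh r₀) * (b t * Real.cosh r - 1) /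
          ((b t ^ 2 - 1) * (b t - Real.cosh r))) ≤ δ * y t * 1 := by gcongr
    have h4 : s t ^ 2 - 1 = 2 * (δ * y t) + δ ^ 2 * y t ^ 2 := by simp only [hs]; ring
    have h5 : 0 < δ * y t := by positivity
    linarith
  · refine ⟨0, fun r hr t ht => ?_⟩
    have hr' : r ∈ Set.Icc 0 r₀ := ⟨hr.1, hr.2.le⟩
    have hD := hbc r hr' t ht.1.le
    have hB := hb2 t ht.1.le
    have : 0 < (b t ^ 2 - 1) / (b t - Real.cosh r) ^ 2 := by positivity
    linarith
  · intro r hr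
    refine le_trans ?_ (u_nonneg S r hr _ (by linarith))
    have hy0 : y 0 = 1 := by simp [hy]
    have hB := hb2 0 le_rfl
    have hD := hbc r hr 0 le_rfl
    have hb0 : b 0 = Real.cosh r₀ + C := by simp [hb, hy0]
    have hs0' : s 0 = 1 + δ := by simp [hs, hy0]
    have h1 : Real.log (b 0 ^ 2 - 1) ≤ 2 * Real.log (b 0) := by
      have := Real.log_le_log hB (show b 0 ^ 2 - 1 ≤ b 0 ^ 2 by linarith)
      rw [Real.log_pow] at this
      exact_mod_cast this
    have h2 : Real.log (b 0) ≤ Real.log ((b 0 - Real.cosh r) * s 0) := by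
      apply Real.log_le_log (by linarith [hbR 0 le_rfl])
      rw [hs0', hb0]
      have : C * (1 + δ) ≤ (Real.cosh r₀ + C - Real.cosh r) * (1 + δ) := by
        have := hcr r hr
        gcongr; linarith
      linarith
    rw [Real.log_mul hD.ne' (by linarith [hsp 0 le_rfl])] at h2
    linarith
  · intro t ht
    have ht0 := ht.1.le
    have hB := hb2 t ht0
    have hD := hbc r₀ ⟨hr0.le, le_rfl⟩ t ht0
    have hst := hsp t ht0
    have hbt := hbR t ht0
    have hsq : Real.exp (Real.log (b t ^ 2 - 1) / 2) = Real.sqrt (b t ^ 2 - 1) := by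
      rw [Real.sqrt_eq_rpow, Real.rpow_def_of_pos hB]; ring_nf
    simp only [Real.exp_sub, hsq, Real.exp_log hD, Real.exp_log (show 0 < s t by linarith)]
    have hs1 : s t ≤ 1 + δ := by
      have := mul_le_mul_of_nonneg_left (hy1 t ht0) hδp.le
      simp only [hs]; linarith
    have hsc : Real.cosh r₀ ^ 2 = Real.sinh r₀ ^ 2 + 1 := Real.cosh_sq r₀
    have hroot : b t * Real.cosh r₀ - 1 ≤ Real.cosh r₀ * Real.sqrt (b t ^ 2 - 1) := by
      rw [← Real.sqrt_sq hc0.le, ← Real.sqrt_mul (by positivity), Real.sqrt_sq hc0.le]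
      apply Real.le_sqrt_of_sq_le
      nlinarith
    set Q := Real.sqrt (b t ^ 2 - 1) with hQ
    have hQ0 : 0 ≤ Q := Real.sqrt_nonneg _
    have e1 : Real.sinh r₀ / (b t - Real.cosh r₀) + Real.cosh r₀ / Real.sinh r₀
        = (b t * Real.cosh r₀ - 1) / (Real.sinh r₀ * (b t - Real.cosh r₀)) := by
      field_simp
      linear_combination (-1) * hsc
    rw [e1]
    calc (b t * Real.cosh r₀ - 1) / (Real.sinh r₀ * (b t - Real.cosh r₀))
        ≤ (Real.cosh r₀ * Q) / (Real.sinh r₀ * (b t - Real.cosh r₀)) := by gcongr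
      _ = (s t * (Real.cosh r₀ / Real.sinh r₀)) * (Q / (b t - Real.cosh r₀) / s t) := by
          have : s t ≠ 0 := by linarith
          field_simp
      _ ≤ ((1 + δ) * (Real.cosh r₀ / Real.sinh r₀)) * (Q / (b t - Real.cosh r₀) / s t) := by
          have : 0 < s t := by linarith
          gcongr
      _ = _ := by rw [hδη]
  · intro t ht
    rw [S.hbdry (t₁ + t) (by linarith [ht.1]) (EReal.coe_lt_top _)]
    have := S.hη_mono t₁ (t₁ + t) (by linarith [ht.1]) (by linarith [ht.1])
    gcongr

lemma inv_bound (r₀ r : ℝ) (hr : r ∈ Set.Ioo 0 r₀) :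
    Real.cosh r₀ - Real.cosh r ≤ Real.sinh r₀ * (r₀ - r) := by
  apply (convex_Icc r r₀).image_sub_le_mul_sub_of_deriv_le
    Real.continuous_cosh.continuousOn Real.differentiable_cosh.differentiableOn
    _ r ⟨le_rfl, hr.2.le⟩ r₀ ⟨hr.2.le, le_rfl⟩ hr.2.le
  intro x hx
  rw [interior_Icc] at hx
  rw [Real.deriv_cosh]
  exact Real.sinh_le_sinh.2 hx.2.le

lemma not_int (r₀ : ℝ) (hr0 : 0 < r₀) :
    ¬ MeasureTheory.IntegrableOn (fun r => Real.exp (Real.log (Real.sinh r₀)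
      - Real.log (Real.cosh r₀ - Real.cosh r))) (Set.Ioo 0 r₀) := by
  intro h
  have hs0 := Real.sinh_pos_iff.2 hr0
  have h1 : IntegrableOn (fun x : ℝ => (x - r₀)⁻¹) (Set.Ioo 0 r₀) := by
    refine Integrable.mono h ?_ ?_
    · exact (Measurable.inv (measurable_id.sub_const r₀)).aestronglyMeasurable
    · refine (ae_restrict_mem measurableSet_Ioo).mono fun r hr => ?_
      have hc : 0 < Real.cosh r₀ - Real.cosh r := by
        rw [sub_pos, Real.cosh_lt_cosh, abs_of_pos hr.1, abs_of_pos hr0]; exact hr.2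
      have hd : 0 < r₀ - r := sub_pos.2 hr.2
      rw [Real.exp_sub, Real.exp_log hs0, Real.exp_log hc, Real.norm_eq_abs, Real.norm_eq_abs,
        abs_inv, abs_sub_comm, abs_of_pos hd, abs_of_pos (by positivity), le_div_iff₀ hc,
        inv_mul_le_iff₀ hd, mul_comm]
      exact inv_bound r₀ r hr
  have h2 : IntervalIntegrable (fun x : ℝ => (x - r₀)⁻¹) volume 0 r₀ := by
    rw [intervalIntegrable_iff_integrableOn_Ioo_of_le hr0.le]; exact h1
  rw [intervalIntegrable_sub_inv_iff] at h2
  rcases h2 with h2 | h2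
  · linarith
  · exact h2 Set.right_mem_uIcc

lemma uinf_ode (r₀ r : ℝ) (hr : r ∈ Set.Ioo 0 r₀) (f : ℝ → ℝ)
    (hf : f = fun r => Real.log (Real.sinh r₀) - Real.log (Real.cosh r₀ - Real.cosh r)) :
    deriv (deriv f) r + Real.cosh r / Real.sinh r * deriv f r + 1 = Real.exp (2 * f r) := by
  have hr0 : 0 < r₀ := hr.1.trans hr.2
  have hs0 := Real.sinh_pos_iff.2 hr0
  have hs := Real.sinh_pos_iff.2 hr.1
  have hc : ∀ r ∈ Set.Ioo 0 r₀, 0 < Real.cosh r₀ - Real.cosh r := by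
    intro r hr
    rw [sub_pos, Real.cosh_lt_cosh, abs_of_pos hr.1, abs_of_pos hr0]; exact hr.2
  have hd : ∀ r ∈ Set.Ioo 0 r₀, deriv f r = Real.sinh r / (Real.cosh r₀ - Real.cosh r) := by
    intro r hr
    have h1 := ((Real.hasDerivAt_cosh r).const_sub (Real.cosh r₀)).log (hc r hr).ne'
    have h2 := h1.const_sub (Real.log (Real.sinh r₀))
    rw [hf, h2.deriv]; ring
  have hdd : deriv (deriv f) r = deriv (fun r => Real.sinh r / (Real.cosh r₀ - Real.cosh r)) r := by
    apply Filter.EventuallyEq.deriv_eq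
    filter_upwards [Ioo_mem_nhds hr.1 hr.2] with x hx using hd x hx
  have h3 := (Real.hasDerivAt_sinh r).div ((Real.hasDerivAt_cosh r).const_sub (Real.cosh r₀))
    (hc r hr).ne'
  have hcr := hc r hr
  have h4 : deriv (fun r => Real.sinh r / (Real.cosh r₀ - Real.cosh r)) r = _ := h3.deriv
  rw [hdd, h4, hd r hr, hf]
  have e : Real.exp (2 * (Real.log (Real.sinh r₀) - Real.log (Real.cosh r₀ - Real.cosh r)))
      = (Real.sinh r₀ / (Real.cosh r₀ - Real.cosh r)) ^ 2 := by
    rw [two_mul, Real.exp_add, Real.exp_sub, Real.exp_log hs0, Real.exp_log hcr]; ring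
  simp only [e]
  have q1 := Real.cosh_sq r
  have q2 := Real.cosh_sq r₀
  field_simp
  linear_combination q2 - q1

/-- With `T = ∞` and `η'(t) ≥ ε(1+t)⁻¹(ln(1+t))⁻¹` for large `t`:
`u` is non-decreasing in `t` and converges, uniformly on each `[0,r₁] ⊂ [0,r₀)`, to a
function `u_∞` solving `∂ᵣ²u_∞ + coth(r)·∂ᵣu_∞ + 1 = e^{2u_∞}` on `(0,r₀)` (Gauss
curvature `-1`), with `∫₀^{r₀} e^{u_∞} dr = ∞` (completeness of `g_∞ = e^{2u_∞}g₀`). -/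
theorem stmt_19 (r₀ : ℝ) (u : ℝ → ℝ → ℝ) (η : ℝ → ℝ)
    (S : Setup2 r₀ ⊤ u η)
    (hη' : ∃ ε : ℝ, 0 < ε ∧ ∃ T' : ℝ, 0 < T' ∧ ∀ t : ℝ, T' ≤ t →
      ε * (1 + t)⁻¹ * (Real.log (1 + t))⁻¹ ≤ deriv η t) :
    (∀ r ∈ Set.Icc 0 r₀, ∀ t₁ t₂ : ℝ, 0 ≤ t₁ → t₁ ≤ t₂ → u r t₁ ≤ u r t₂) ∧
    ∃ uInf : ℝ → ℝ,
      (∀ r₁ ∈ Set.Ioo 0 r₀,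
        TendstoUniformlyOn (fun t r => u r t) uInf Filter.atTop (Set.Icc 0 r₁)) ∧
      (∀ r ∈ Set.Ioo 0 r₀,
        deriv (deriv uInf) r + Real.cosh r / Real.sinh r * deriv uInf r + 1
          = Real.exp (2 * uInf r)) ∧
      ¬ MeasureTheory.IntegrableOn (fun r => Real.exp (uInf r)) (Set.Ioo 0 r₀) := by
  refine ⟨u_mono S, fun r => Real.log (Real.sinh r₀) - Real.log (Real.cosh r₀ - Real.cosh r),
    ?_, fun r hr => uinf_ode r₀ r hr _ rfl, not_int r₀ S.hr₀⟩
  intro r₁ hr₁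
  have hr0 := S.hr₀
  have hs0 := Real.sinh_pos_iff.2 hr0
  have hc0 := Real.cosh_pos r₀
  obtain ⟨t₁, δ, ht₁, hδ, hlow⟩ := u_lower S
  have hd1 : 0 < Real.cosh r₀ - Real.cosh r₁ := by
    rw [sub_pos, Real.cosh_lt_cosh, abs_of_pos hr₁.1, abs_of_pos hr0]; exact hr₁.2
  have hcr : ∀ r ∈ Set.Icc 0 r₁, Real.cosh r ≤ Real.cosh r₁ := by
    intro r hr
    rw [Real.cosh_le_cosh, abs_of_nonneg hr.1, abs_of_pos hr₁.1]; exact hr.2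
  set C := Real.cosh r₀ / δ with hC
  have hCp : 0 < C := by positivity
  have hlim : Tendsto (fun t => C * (1 + δ * (t - t₁))⁻¹ / (Real.cosh r₀ - Real.cosh r₁)
      + δ * (1 + δ * (t - t₁))⁻¹) atTop (nhds 0) := by
    have h1 : Tendsto (fun t : ℝ => (1 + δ * (t - t₁))⁻¹) atTop (nhds 0) := by
      apply tendsto_inv_atTop_zero.comp
      apply tendsto_atTop_add_const_left
      apply Tendsto.const_mul_atTop hδ
      exact tendsto_atTop_add_const_right _ _ tendsto_id
    have := ((h1.const_mul C).div_const (Real.cosh r₀ - Real.cosh r₁)).add (h1.const_mul δ)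
    simpa using this
  rw [Metric.tendstoUniformlyOn_iff]
  intro ε hε
  filter_upwards [hlim.eventually_lt_const hε, eventually_ge_atTop t₁] with t ht htt r hr
  have hrI : r ∈ Set.Icc 0 r₀ := ⟨hr.1, by linarith [hr.2, hr₁.2]⟩
  have hup := u_upper S r ⟨hr.1, by linarith [hr.2, hr₁.2]⟩ t (by linarith)
  have hlo := hlow r hrI (t - t₁) (by linarith)
  rw [show t₁ + (t - t₁) = t by ring] at hlo
  have hD : 0 < Real.cosh r₀ - Real.cosh r := by linarith [hcr r hr]
  have hden : 0 < 1 + δ * (t - t₁) := by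
    have := mul_nonneg hδ.le (sub_nonneg.2 htt)
    linarith
  set y := (1 + δ * (t - t₁))⁻¹ with hy
  have hyp : 0 < y := inv_pos.2 hden
  have hCy : 0 < C * y := by positivity
  have l1 : Real.log (Real.sinh r₀) ≤ Real.log ((Real.cosh r₀ + C * y) ^ 2 - 1) / 2 := by
    have : 2 * Real.log (Real.sinh r₀) ≤ Real.log ((Real.cosh r₀ + C * y) ^ 2 - 1) := by
      have h := Real.log_le_log (show 0 < Real.sinh r₀ ^ 2 by positivity)
        (show Real.sinh r₀ ^ 2 ≤ (Real.cosh r₀ + C * y) ^ 2 - 1 by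
          nlinarith [Real.cosh_sq r₀])
      rw [Real.log_pow] at h
      exact_mod_cast h
    linarith
  have l2 : Real.log (1 + δ * y) ≤ δ * y := by
    have := Real.log_le_sub_one_of_pos (show 0 < 1 + δ * y by positivity)
    linarith
  have l3 : Real.log (Real.cosh r₀ + C * y - Real.cosh r) - Real.log (Real.cosh r₀ - Real.cosh r)
      ≤ C * y / (Real.cosh r₀ - Real.cosh r₁) := by
    rw [← Real.log_div (by linarith) hD.ne']
    have := Real.log_le_sub_one_of_pos
      (show 0 < (Real.cosh r₀ + C * y - Real.cosh r) / (Real.cosh r₀ - Real.cosh r) from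
        div_pos (by linarith) hD)
    have e : (Real.cosh r₀ + C * y - Real.cosh r) / (Real.cosh r₀ - Real.cosh r) - 1
        = C * y / (Real.cosh r₀ - Real.cosh r) := by
      field_simp; ring
    rw [e] at this
    refine this.trans ?_
    have := hcr r hr
    gcongr
  rw [Real.dist_eq, abs_of_nonneg (by linarith)]
  linarith
end
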